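/- arXiv:2505.16179 — 5 statements merged into one kernel-verified Lean document; each statement's English description precedes it below -/
import Mathlib

section
/- If G is a finite simple graph with n ≥ 4 vertices and fewer than (80n − 134)/31 edges, then G has a bipartite cut. -/
/-!
Take a counterexample with the fewest vertices, a *critical* graph; it has at least five vertices.
A bipartite cut is encoded as a labelling of the vertices by `Fin 4`: labels `0`, `1` for the two
sides and `2`, `3` for the colour classes of the bipartite middle part (`hasBipartiteCut_iff`).

*Reductions.* Deleting and identifying a few vertices of a critical graph gives a smaller graph. If
enough edges disappear, that is, more than `80 / 31` for every lost vertex, the smaller graph has a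
bipartite cut by minimality, so its labelling cannot extend to the original graph
(`Critical.reduce`). Hence two nonadjacent vertices have at most two common neighbours
(`Critical.f3`), no neighbourhood of a vertex of degree at least three is a clique (`Critical.r1`),
and three larger configurations do not occur (`Critical.r3`, `Critical.r4`, `Critical.r5`).

*Separators.* A set that separates two parts of a critical graph induces a nonbipartite graph
(`nb_of_noCut`). Applied to the neighbourhood of one vertex, or of two or three adjacent vertices of
small degree, this yields an odd cycle in a list of at most six vertices, which is played off
against the reductions. The outcome: all degrees are at least four; a vertex of degree four lies in
a `K₄` whose other vertices have degree at least six (`Critical.l2`, `Critical.l3`, `Critical.l4`);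
a `K₄` with two vertices of degree five extends to a `K₅` (`Critical.l5`), which has at most two
such vertices (`Critical.l5'`); a vertex of degree five outside all `K₄` has a spanning five-cycle in
its neighbourhood (`Critical.wheel`), with no vertex of degree four on it (`Critical.rim4`) and no
three consecutive vertices of degree five (`Critical.rim555`).

*Discharging.* Give every vertex `v` the charge `31 d(v) - 160`, which is `-36` for degree four, `-5`
for degree five, and at least `26` otherwise. Vertices of degree at least six send charge to
neighbours of degree four and five (`wt`). The structure above shows that every vertex ends with
nonnegative charge (`Critical.recv_four`, `Critical.recv_five`, `Critical.give`), so
`62 m ≥ 160 n`, contradicting `31 m + 134 < 80 n`.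
-/

open SimpleGraph

/-- `M` is a vertex cut of `G`: the complement of `M` can be partitioned into two nonempty
sets `L`, `R` with no edge of `G` joining a vertex of `L` to a vertex of `R`. -/
def IsVertexCut {V : Type*} (G : SimpleGraph V) (M : Set V) : Prop :=
  ∃ L R : Set V, L.Nonempty ∧ R.Nonempty ∧ Disjoint L R ∧ L ∪ R = Mᶜ ∧
    ∀ x ∈ L, ∀ y ∈ R, ¬ G.Adj x y

/-- `(M, L, R)` is a separation of `G`. -/
def IsSeparation {V : Type*} (G : SimpleGraph V) (M L R : Set V) : Prop :=
  L.Nonempty ∧ R.Nonempty ∧ M ∪ L ∪ R = Set.univ ∧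
  Disjoint M L ∧ Disjoint M R ∧ Disjoint L R ∧
  ∀ x ∈ L, ∀ y ∈ R, ¬ G.Adj x y

/-- The quality function `q_{α,β}(G) = α|V(G)| − |E(G)| − β`. -/
noncomputable def quality {V : Type*} (α β : ℝ) (G : SimpleGraph V) : ℝ :=
  α * Nat.card V - Nat.card G.edgeSet - β

/-- degree of a vertex as the cardinality of its neighbor set. -/
noncomputable def vdeg {V : Type*} (G : SimpleGraph V) (v : V) : ℕ :=
  (G.neighborSet v).ncard

/-- The class of forests. -/
def ForestClass : ∀ (W : Type), SimpleGraph W → Prop := fun _ H => H.IsAcyclic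

/-- The class of bipartite graphs. -/
def BipartiteClass : ∀ (W : Type), SimpleGraph W → Prop := fun _ H => H.Colorable 2

/-- `G` has a `Ψ`-cut: a vertex cut whose induced subgraph lies in `Ψ`. -/
def HasPsiCut (Ψ : ∀ (W : Type), SimpleGraph W → Prop) {V : Type} (G : SimpleGraph V) : Prop :=
  ∃ M : Set V, IsVertexCut G M ∧ Ψ ↥M (G.induce M)

/-- `G` has a forest cut. -/
def HasForestCut {V : Type*} (G : SimpleGraph V) : Prop :=
  ∃ M : Set V, IsVertexCut G M ∧ (G.induce M).IsAcyclic

/-- `G` has a bipartite cut. -/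
def HasBipartiteCut {V : Type*} (G : SimpleGraph V) : Prop :=
  ∃ M : Set V, IsVertexCut G M ∧ (G.induce M).Colorable 2

/-- `G` has an independent cut. -/
def HasIndependentCut {V : Type*} (G : SimpleGraph V) : Prop :=
  ∃ M : Set V, IsVertexCut G M ∧ ∀ x ∈ M, ∀ y ∈ M, ¬ G.Adj x y

/-- `G` is a minimal counterexample for the class `Ψ` and parameters `α`, `β`. -/
def MinCounterexample (Ψ : ∀ (W : Type), SimpleGraph W → Prop) (α β : ℝ)
    {V : Type} (G : SimpleGraph V) : Prop :=
  4 ≤ Nat.card V ∧ 0 < quality α β G ∧ ¬ HasPsiCut Ψ G ∧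
  ∀ (W : Type) (H : SimpleGraph W),
    4 ≤ Nat.card W → Nat.card W < Nat.card V → 0 < quality α β H → HasPsiCut Ψ H

/-- `T0`: a triangle together with an isolated vertex. -/
def graphT0 : SimpleGraph (Fin 4) := SimpleGraph.fromEdgeSet {s(0,1), s(0,2), s(1,2)}

/-- `T1`: a triangle with an extra vertex joined to exactly one triangle vertex. -/
def graphT1 : SimpleGraph (Fin 4) := SimpleGraph.fromEdgeSet {s(0,1), s(0,2), s(1,2), s(2,3)}

/-- The diamond graph `K4` minus one edge. -/
def diamondGraph : SimpleGraph (Fin 4) := (⊤ : SimpleGraph (Fin 4)).deleteEdges {s(0,1)}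

/-- Number of edges of `G` with one endpoint in `X` and the other outside `X`. -/
noncomputable def crossEdges {V : Type*} (G : SimpleGraph V) (X : Set V) : ℕ :=
  {e : Sym2 V | e ∈ G.edgeSet ∧ ∃ x ∈ X, ∃ y ∉ X, e = s(x,y)}.ncard

/-! ### Cuts as labellings and the reduction lemma -/

universe u

/-- Compatibility of the labels of two adjacent vertices, where `0` and `1` stand for the two
sides of a cut and `2`, `3` for the two colour classes of its bipartite middle part. -/
def Compat (a b : Fin 4) : Prop := ¬(a = 0 ∧ b = 1) ∧ ¬(a = 1 ∧ b = 0) ∧ ¬(a = b ∧ 2 ≤ a)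

instance : DecidableRel Compat := fun a b => by unfold Compat; infer_instance

lemma Compat.symm {a b : Fin 4} (h : Compat a b) : Compat b a := by
  revert h; revert a b; decide

/-- A bipartite cut is the same as a labelling by `Fin 4` that is compatible along edges and
uses both of the labels `0` and `1`. -/
lemma hasBipartiteCut_iff {V : Type*} (G : SimpleGraph V) :
    HasBipartiteCut G ↔ ∃ s : V → Fin 4, (∀ a b, G.Adj a b → Compat (s a) (s b)) ∧
      (∃ a, s a = 0) ∧ ∃ b, s b = 1 := by
  classical
  constructor
  · rintro ⟨M, ⟨L, R, ⟨l, hl⟩, ⟨r, hr⟩, hd, hu, hno⟩, ⟨C⟩⟩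
    have hLM : ∀ v, v ∈ L → v ∉ M := fun v hv => by
      have : v ∈ Mᶜ := hu ▸ Or.inl hv
      exact this
    have hRM : ∀ v, v ∈ R → v ∉ M := fun v hv => by
      have : v ∈ Mᶜ := hu ▸ Or.inr hv
      exact this
    have hLR : ∀ v, v ∈ L → v ∉ R := fun v hv hv' => Set.disjoint_left.mp hd hv hv'
    have hM : ∀ v, v ∉ L → v ∉ R → v ∈ M := fun v h1 h2 => by
      by_contra h3
      have : v ∈ L ∪ R := hu ▸ h3
      rcases this with h | h
      · exact h1 h
      · exact h2 h
    have hrL : r ∉ L := fun h => hLR r h hr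
    refine ⟨fun v => if v ∈ L then 0 else if v ∈ R then 1 else
      if h : v ∈ M then (if C ⟨v, h⟩ = 0 then 2 else 3) else 2, ?_, ⟨l, by simp [hl]⟩,
      ⟨r, by simp [hrL, hr]⟩⟩
    intro a b hab
    by_cases haL : a ∈ L
    · have hb : b ∉ R := fun h => hno a haL b h hab
      by_cases hbL : b ∈ L
      · simp only [haL, hbL, if_true]; decide
      · have hbM := hM b hbL hb
        simp only [haL, hbL, hb, hbM, if_true, if_false, dite_true]
        split_ifs <;> decide
    · by_cases haR : a ∈ R
      · have hb : b ∉ L := fun h => hno b h a haR hab.symm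
        by_cases hbR : b ∈ R
        · simp only [haL, haR, hb, hbR, if_true, if_false]; decide
        · have hbM := hM b hb hbR
          simp only [haL, haR, hbR, hb, hbM, if_true, if_false, dite_true]
          split_ifs <;> decide
      · have haM := hM a haL haR
        by_cases hbL : b ∈ L
        · simp only [haL, haR, hbL, haM, if_true, if_false, dite_true]
          split_ifs <;> decide
        · by_cases hbR : b ∈ R
          · simp only [haL, haR, hbL, hbR, haM, if_true, if_false, dite_true]
            split_ifs <;> decide
          · have hbM := hM b hbL hbR
            have hne : C ⟨a, haM⟩ ≠ C ⟨b, hbM⟩ := C.valid (by simpa using hab)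
            simp only [haL, haR, hbL, hbR, haM, hbM, if_false, dite_true]
            generalize C ⟨a, haM⟩ = x at hne
            generalize C ⟨b, hbM⟩ = y at hne
            revert x y; decide
  · rintro ⟨s, hs, ⟨a, ha⟩, ⟨b, hb⟩⟩
    refine ⟨{v | 2 ≤ s v}, ⟨{v | s v = 0}, {v | s v = 1}, ⟨a, ha⟩, ⟨b, hb⟩, ?_, ?_, ?_⟩, ⟨?_⟩⟩
    · rw [Set.disjoint_left]
      intro v h1 h2
      simp only [Set.mem_ofPred_eq] at h1 h2
      rw [h1] at h2; exact absurd h2 (by decide)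
    · ext v
      simp only [Set.mem_union, Set.mem_ofPred_eq, Set.mem_compl_iff]
      generalize s v = x
      revert x; decide
    · intro x hx y hy hxy
      exact (hs x y hxy).1 ⟨hx, hy⟩
    · refine SimpleGraph.Coloring.mk (fun v => if s v.1 = 2 then 0 else 1) ?_
      rintro ⟨v, hv⟩ ⟨w, hw⟩ hvw
      have := hs v w (by simpa using hvw)
      have key : ∀ x y : Fin 4, 2 ≤ x → 2 ≤ y → Compat x y →
          (if x = 2 then (0 : Fin 2) else 1) ≠ if y = 2 then 0 else 1 := by decide
      exact key _ _ hv hw this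

/-- A critical graph: at least five vertices, fewer than `(80 n - 134) / 31` edges, no bipartite
cut, while every graph on fewer (but at least four) vertices that is this sparse has one. -/
structure Critical {V : Type u} (G : SimpleGraph V) : Prop where
  big : 5 ≤ Nat.card V
  few : 31 * Nat.card G.edgeSet + 134 < 80 * Nat.card V
  noCut : ¬ HasBipartiteCut G
  minimal : ∀ (W : Type u) [Finite W] (H : SimpleGraph W), 4 ≤ Nat.card W →
    Nat.card W < Nat.card V → 31 * Nat.card H.edgeSet + 134 < 80 * Nat.card W → HasBipartiteCut H

/-- **Reduction lemma.** `f` names some vertices of a critical graph. The named vertices in `X` are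
deleted, the others are identified along the retraction `r`, so that the vertices in `D ⊇ X`
disappear, and the edges in `A` are added. The edges in `F` are lost: each of them meets `X` or
becomes parallel to an edge in `K`. If enough edges are lost, then some compatible labelling of
the resulting graph does not extend to `X`. -/
lemma Critical.reduce {V : Type u} [Finite V] {G : SimpleGraph V} (hG : Critical G)
    {N : ℕ} (f : Fin N → V) (hf : Function.Injective f) (X D : Finset (Fin N))
    (r : Fin N → Fin N) (F K A : Finset (Sym2 (Fin N)))
    (hXD : X ⊆ D) (hrD : ∀ i, i ∉ X → r i ∉ D) (hr : ∀ i, i ∉ D → r i = i)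
    (hD : D.Nonempty)
    (hcard : D.card + 4 ≤ Nat.card V)
    (hcount : 80 * D.card + 31 * A.card ≤ 31 * F.card)
    (hFK : Disjoint F K)
    (hlost : ∀ e ∈ F, (∃ i ∈ X, i ∈ e) ∨ ∃ e' ∈ K, e'.map r = e.map r)
    (hF : ∀ e ∈ F, e.map f ∈ G.edgeSet) (hK : ∀ e ∈ K, e.map f ∈ G.edgeSet)
    (hloop : ∀ i j, i ∉ X → j ∉ X → r i = r j → ¬ G.Adj (f i) (f j))
    (hlift : ∀ s : V → Fin 4,
      (∀ a b, (∀ i ∈ X, a ≠ f i) → (∀ i ∈ X, b ≠ f i) → G.Adj a b → Compat (s a) (s b)) →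
      (∀ i, i ∉ X → s (f (r i)) = s (f i)) →
      (∀ i j, s(i, j) ∈ A → Compat (s (f i)) (s (f j))) →
      ∃ s' : V → Fin 4, (∀ a, (∀ i ∈ X, a ≠ f i) → s' a = s a) ∧
        ∀ a b, G.Adj a b → Compat (s' a) (s' b))
    (hA : ∀ i j, s(i, j) ∈ A → i ≠ j ∧ i ∉ D ∧ j ∉ D) : False := by
  classical
  have := Fintype.ofFinite V
  set D' : Finset V := D.image f with hD'
  have hDc : D'.card = D.card := Finset.card_image_of_injective _ hf
  -- the retraction on all of `V`
  set ρ : V → V := Function.extend f (f ∘ r) id with hρ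
  have ρf : ∀ i, ρ (f i) = f (r i) := fun i => hf.extend_apply _ _ _
  have ρo : ∀ v, (∀ i, v ≠ f i) → ρ v = v := fun v hv =>
    Function.extend_apply' _ _ _ (by rintro ⟨i, hi⟩; exact hv i hi.symm)
  have ρD : ∀ v, (∀ i ∈ X, v ≠ f i) → ρ v ∉ D' := by
    intro v hv
    by_cases h : ∃ i, v = f i
    · obtain ⟨i, rfl⟩ := h
      rw [ρf]
      have : i ∉ X := fun hi => hv i hi rfl
      simpa [hD', hf.eq_iff] using hrD i this
    · push Not at h
      rw [ρo v h]
      simp only [hD', Finset.mem_image, not_exists, not_and]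
      exact fun i _ e => h i e.symm
  have ρid : ∀ v, v ∉ D' → ρ v = v := by
    intro v hv
    by_cases h : ∃ i, v = f i
    · obtain ⟨i, rfl⟩ := h
      rw [ρf, hr i]
      intro hi; exact hv (Finset.mem_image_of_mem _ hi)
    · push Not at h
      exact ρo v h
  have ρadj : ∀ a b, (∀ i ∈ X, a ≠ f i) → (∀ i ∈ X, b ≠ f i) → G.Adj a b → ρ a ≠ ρ b := by
    intro a b ha hb hab he
    by_cases h1 : ∃ i, a = f i <;> by_cases h2 : ∃ i, b = f i
    · obtain ⟨i, rfl⟩ := h1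
      obtain ⟨j, rfl⟩ := h2
      rw [ρf, ρf] at he
      exact hloop i j (fun h => ha i h rfl) (fun h => hb j h rfl) (hf he) hab
    · obtain ⟨i, rfl⟩ := h1
      push Not at h2
      rw [ρf, ρo b h2] at he
      exact h2 _ he.symm
    · obtain ⟨i, rfl⟩ := h2
      push Not at h1
      rw [ρf, ρo a h1] at he
      exact h1 _ he
    · push Not at h1 h2
      rw [ρo a h1, ρo b h2] at he
      exact hab.ne he
  let H : SimpleGraph {v // v ∉ D'} :=
    { Adj := fun u w => u ≠ w ∧
        ((∃ a b, (∀ i ∈ X, a ≠ f i) ∧ (∀ i ∈ X, b ≠ f i) ∧ G.Adj a b ∧ ρ a = u ∧ ρ b = w) ∨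
          ∃ i j, s(i, j) ∈ A ∧ f i = u ∧ f j = w)
      symm := by
        constructor
        rintro u w ⟨hne, ⟨a, b, ha, hb, hab, h1, h2⟩ | ⟨i, j, hij, h1, h2⟩⟩
        · exact ⟨hne.symm, Or.inl ⟨b, a, hb, ha, hab.symm, h2, h1⟩⟩
        · exact ⟨hne.symm, Or.inr ⟨j, i, by rwa [Sym2.eq_swap], h2, h1⟩⟩
      loopless := ⟨fun u h => h.1 rfl⟩ }
  have hW : Nat.card {v // v ∉ D'} + D.card = Nat.card V := by
    rw [Nat.card_eq_fintype_card, Nat.card_eq_fintype_card, ← hDc, Fintype.card_subtype_compl]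
    simp only [Fintype.card_coe]
    exact Nat.sub_add_cancel (Finset.card_le_univ _)
  -- counting the edges of the reduced graph
  have hE : Nat.card H.edgeSet + F.card ≤ Nat.card G.edgeSet + A.card := by
    set F' : Finset (Sym2 V) := F.image (Sym2.map f) with hF'
    have hFc : F'.card = F.card := Finset.card_image_of_injective _ (Sym2.map.injective hf)
    have hsub : F' ⊆ G.edgeFinset := by
      intro e he
      obtain ⟨e₀, he₀, rfl⟩ := Finset.mem_image.mp he
      simpa using hF e₀ he₀
    have himg : H.edgeFinset.image (Sym2.map Subtype.val) ⊆
        (G.edgeFinset \ F').image (Sym2.map ρ) ∪ A.image (Sym2.map f) := by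
      intro z hz
      obtain ⟨e, he, rfl⟩ := Finset.mem_image.mp hz
      clear hz
      induction e using Sym2.ind with
      | _ u w =>
      rw [SimpleGraph.mem_edgeFinset, SimpleGraph.mem_edgeSet] at he
      obtain ⟨hne, ⟨a, b, ha, hb, hab, h1, h2⟩ | ⟨i, j, hij, h1, h2⟩⟩ := he
      · apply Finset.mem_union_left
        rw [Finset.mem_image]
        by_cases hin : s(a, b) ∈ F'
        · obtain ⟨e, heF, hee⟩ := Finset.mem_image.mp hin
          rcases hlost e heF with ⟨i, hiX, hie⟩ | ⟨e', he', hee'⟩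
          · exfalso
            have : f i ∈ s(a, b) := by rw [← hee]; exact Sym2.mem_map.mpr ⟨i, hie, rfl⟩
            rcases Sym2.mem_iff.mp this with h | h
            · exact ha i hiX h.symm
            · exact hb i hiX h.symm
          · have hmm : ∀ z : Sym2 (Fin N), (z.map f).map ρ = (z.map r).map f := by
              intro z
              rw [Sym2.map_map, Sym2.map_map]
              congr 1
              funext i
              exact ρf i
            refine ⟨e'.map f, ?_, ?_⟩
            · rw [Finset.mem_sdiff]
              refine ⟨by simpa using hK e' he', ?_⟩
              intro h
              obtain ⟨e'', h1', h2'⟩ := Finset.mem_image.mp h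
              have := Sym2.map.injective hf h2'
              subst this
              exact Finset.disjoint_left.mp hFK h1' he'
            · rw [hmm, hee', ← hmm, hee]
              simp [h1, h2]
        · exact ⟨s(a, b), by simp [hab, hin], by simp [h1, h2]⟩
      · apply Finset.mem_union_right
        rw [Finset.mem_image]
        exact ⟨s(i, j), hij, by simp [h1, h2]⟩
    have h1 := Finset.card_le_card himg
    rw [Finset.card_image_of_injective _ (Sym2.map.injective Subtype.val_injective)] at h1
    have h2 := Finset.card_union_le ((G.edgeFinset \ F').image (Sym2.map ρ))
      (A.image (Sym2.map f))
    have h3 : ((G.edgeFinset \ F').image (Sym2.map ρ)).card ≤ (G.edgeFinset \ F').card :=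
      Finset.card_image_le
    have h4 : (A.image (Sym2.map f)).card ≤ A.card := Finset.card_image_le
    have h5 := Finset.card_sdiff_add_card_eq_card hsub
    have h6 : Nat.card H.edgeSet = H.edgeFinset.card := by
      rw [Nat.card_eq_fintype_card, SimpleGraph.edgeFinset_card]
    have h7 : Nat.card G.edgeSet = G.edgeFinset.card := by
      rw [Nat.card_eq_fintype_card, SimpleGraph.edgeFinset_card]
    omega
  have hDpos := hD.card_pos
  have hfew := hG.few
  obtain ⟨t, ht, ⟨x, hx⟩, ⟨y, hy⟩⟩ := (hasBipartiteCut_iff H).mp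
    (hG.minimal _ H (by omega) (by omega) (by omega))
  -- pull the labelling back along the retraction
  have hsD : ∀ v, (∀ i ∈ X, v ≠ f i) → ρ v ∉ D' := ρD
  let s : V → Fin 4 := fun v => if h : ρ v ∉ D' then t ⟨ρ v, h⟩ else 0
  have hs : ∀ v (h : ρ v ∉ D'), s v = t ⟨ρ v, h⟩ := fun v h => dif_pos h
  have hsW : ∀ v : {v // v ∉ D'}, s v = t v := by
    rintro ⟨v, hv⟩
    have h := ρid v hv
    rw [hs v (by rwa [h])]
    congr 1
    exact Subtype.ext h
  obtain ⟨s', hs', hs''⟩ := hlift s (by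
      intro a b ha hb hab
      rw [hs a (ρD a ha), hs b (ρD b hb)]
      apply ht
      refine ⟨fun h => ρadj a b ha hb hab (congrArg Subtype.val h), Or.inl ⟨a, b, ha, hb, hab, rfl, rfl⟩⟩)
    (by
      intro i hi
      have h1 : ρ (f i) ∉ D' := ρD _ (fun j hj h => hi (hf h ▸ hj))
      have h2 : ρ (f (r i)) = ρ (f i) := by
        rw [ρf, ρf, hr _ (hrD i hi)]
      rw [hs _ h1, hs _ (by rwa [h2])]
      congr 1
      exact Subtype.ext h2)
    (by
      intro i j hij
      obtain ⟨hne, hi, hj⟩ := hA i j hij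
      have hi' : f i ∉ D' := by simpa [hD', hf.eq_iff] using hi
      have hj' : f j ∉ D' := by simpa [hD', hf.eq_iff] using hj
      have e1 := hsW ⟨f i, hi'⟩
      have e2 := hsW ⟨f j, hj'⟩
      simp only at e1 e2
      rw [e1, e2]
      apply ht
      exact ⟨fun h => hne (hf (congrArg Subtype.val h)), Or.inr ⟨i, j, hij, rfl, rfl⟩⟩)
  have hDX : ∀ v, v ∉ D' → ∀ i ∈ X, v ≠ f i := by
    intro v hv i hi h
    exact hv (h ▸ Finset.mem_image_of_mem _ (hXD hi))
  exact hG.noCut ((hasBipartiteCut_iff G).mpr ⟨s', hs'', ⟨x, by rw [hs' _ (hDX _ x.2), hsW, hx]⟩,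
    ⟨y, by rw [hs' _ (hDX _ y.2), hsW, hy]⟩⟩)

/-! ### Nonbipartite vertex sets -/

/-- The induced subgraph on the members of `l` is not bipartite: every two-colouring of the
vertices has a monochromatic edge inside `l`. -/
def NB {V : Type u} (G : SimpleGraph V) (l : List V) : Prop :=
  ∀ c : V → Bool, ∃ a ∈ l, ∃ b ∈ l, G.Adj a b ∧ c a = c b

/-- `l` lists the neighbours of `v` without repetition. -/
def Nb {V : Type u} (G : SimpleGraph V) (v : V) (l : List V) : Prop :=
  l.Nodup ∧ ∀ y, G.Adj v y ↔ y ∈ l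

/-- `v` has exactly `k` neighbours. -/
def Dg {V : Type u} (G : SimpleGraph V) (v : V) (k : ℕ) : Prop :=
  ∃ l, Nb G v l ∧ l.length = k

section basics

variable {V : Type u} {G : SimpleGraph V}

lemma Nb.perm {v : V} {l l' : List V} (h : Nb G v l) (hp : l.Perm l') : Nb G v l' :=
  ⟨hp.nodup_iff.mp h.1, fun y => (h.2 y).trans hp.mem_iff⟩

/-- The list of neighbours may be reordered. -/
lemma Nb.re {v : V} {l l' : List V} (h : Nb G v l) (hl : l ⊆ l' := by simp)
    (hlen : l'.length ≤ l.length := by simp) : Nb G v l' :=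
  h.perm ((List.subperm_of_subset h.1 hl).perm_of_length_le hlen)

lemma Dg.extend {v : V} {k : ℕ} (h : Dg G v k) (l : List V) (hl : l.Nodup)
    (hl' : ∀ y ∈ l, G.Adj v y) : ∃ l', Nb G v (l ++ l') ∧ l.length + l'.length = k := by
  obtain ⟨m, hm, rfl⟩ := h
  have h1 : l.Subperm m := List.subperm_of_subset hl (fun y hy => (hm.2 y).mp (hl' y hy))
  obtain ⟨l₁, hp₁, hs⟩ := h1
  obtain ⟨l', hp⟩ := hs.exists_perm_append
  replace hp := hp.trans (hp₁.append_right l')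
  exact ⟨l', hm.perm hp, by rw [hp.length_eq, List.length_append]⟩

lemma Dg.four {v a b c : V} (h : Dg G v 4) (hl : [a, b, c].Nodup) (ha : G.Adj v a)
    (hb : G.Adj v b) (hc : G.Adj v c) : ∃ d, Nb G v [a, b, c, d] := by
  obtain ⟨l, h1, h2⟩ := h.extend [a, b, c] hl (by simp [ha, hb, hc])
  obtain ⟨d, rfl⟩ := List.length_eq_one_iff.mp (by simp at h2; omega : l.length = 1)
  exact ⟨d, h1⟩

lemma Dg.five {v a b c : V} (h : Dg G v 5) (hl : [a, b, c].Nodup) (ha : G.Adj v a)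
    (hb : G.Adj v b) (hc : G.Adj v c) : ∃ d e, Nb G v [a, b, c, d, e] := by
  obtain ⟨l, h1, h2⟩ := h.extend [a, b, c] hl (by simp [ha, hb, hc])
  obtain ⟨d, e, rfl⟩ := List.length_eq_two.mp
    (by simp at h2; omega : l.length = 2)
  exact ⟨d, e, h1⟩

lemma Dg.five' {v a b c d : V} (h : Dg G v 5) (hl : [a, b, c, d].Nodup) (ha : G.Adj v a)
    (hb : G.Adj v b) (hc : G.Adj v c) (hd : G.Adj v d) : ∃ e, Nb G v [a, b, c, d, e] := by
  obtain ⟨l, h1, h2⟩ := h.extend [a, b, c, d] hl (by simp [ha, hb, hc, hd])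
  obtain ⟨e, rfl⟩ := List.length_eq_one_iff.mp (by simp at h2; omega : l.length = 1)
  exact ⟨e, h1⟩

/-- A vertex with at most one neighbour in `l` does not matter for bipartiteness. -/
lemma NB.peel {p : V} {l : List V} (h : NB G (p :: l))
    (hp : ∀ a ∈ l, ∀ b ∈ l, G.Adj p a → G.Adj p b → a = b) : NB G l := by
  classical
  intro c
  by_cases hpl : p ∈ l
  · obtain ⟨a, ha, b, hb, hab⟩ := h c
    refine ⟨a, ?_, b, ?_, hab⟩
    · rcases List.mem_cons.mp ha with rfl | h <;> assumption
    · rcases List.mem_cons.mp hb with rfl | h <;> assumption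
  · obtain ⟨a, ha, b, hb, hab, hc⟩ := h (fun y => if y = p then
      (if ∃ z ∈ l, G.Adj p z ∧ c z = true then false else true) else c y)
    -- the colour of `p` differs from that of its neighbour in `l`
    have key : ∀ z ∈ l, G.Adj p z →
        (if ∃ z ∈ l, G.Adj p z ∧ c z = true then false else true) ≠ c z := by
      intro z hz hpz
      split_ifs with h1
      · obtain ⟨y, hy, hpy, hcy⟩ := h1
        rw [hp z hz y hy hpz hpy, hcy]; simp
      · intro h2
        exact h1 ⟨z, hz, hpz, h2.symm⟩
    rcases List.mem_cons.mp ha with rfl | ha' <;> rcases List.mem_cons.mp hb with rfl | hb'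
    · exact absurd rfl hab.ne
    · have hne : b ≠ a := fun h => hpl (by rwa [h] at hb')
      rw [if_pos rfl, if_neg hne] at hc
      exact absurd hc (key b hb' hab)
    · have hne : a ≠ b := fun h => hpl (by rwa [h] at ha')
      rw [if_pos rfl, if_neg hne] at hc
      exact absurd hc.symm (key a ha' hab.symm)
    · have hne : a ≠ p := fun h => hpl (by rwa [h] at ha')
      have hne' : b ≠ p := fun h => hpl (by rwa [h] at hb')
      rw [if_neg hne, if_neg hne'] at hc
      exact ⟨a, ha', b, hb', hab, hc⟩

lemma NB.mono {l l' : List V} (h : NB G l) (hl : l ⊆ l') : NB G l' := by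
  intro c
  obtain ⟨a, ha, b, hb, hab⟩ := h c
  exact ⟨a, hl ha, b, hl hb, hab⟩

lemma not_NB_nil : ¬ NB G [] := fun h => by
  obtain ⟨a, ha, _⟩ := h fun _ => true
  simp at ha

lemma not_NB_one {a : V} : ¬ NB G [a] := fun h => not_NB_nil (h.peel (by simp))

lemma not_NB_two {a b : V} : ¬ NB G [a, b] := fun h => not_NB_one (h.peel (by simp))

lemma NB.three {a b c : V} (h : NB G [a, b, c]) : G.Adj a b ∧ G.Adj a c ∧ G.Adj b c := by
  have key : ∀ {a b c : V}, NB G [a, b, c] → G.Adj a b := by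
    intro a b c h
    by_contra hab
    exact not_NB_two (h.peel (by simp [hab]))
  exact ⟨key h, key (h.mono (by simp) : NB G [a, c, b]), key (h.mono (by simp) : NB G [b, c, a])⟩

lemma NB.col4 {a b c d : V} (h : NB G [a, b, c, d]) (hn : [a, b, c, d].Nodup)
    (x y z t : Bool) :
    (x = y ∧ G.Adj a b) ∨ (x = z ∧ G.Adj a c) ∨ (x = t ∧ G.Adj a d) ∨ (y = z ∧ G.Adj b c) ∨
      (y = t ∧ G.Adj b d) ∨ (z = t ∧ G.Adj c d) := by
  classical
  obtain ⟨p, hp, q, hq, hpq, hc⟩ := h (fun v => if v = a then x else if v = b then y else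
    if v = c then z else t)
  simp only [List.mem_cons, List.not_mem_nil, or_false] at hp hq
  simp only [List.nodup_cons, List.mem_cons, List.not_mem_nil, or_false, not_or] at hn
  obtain ⟨⟨h1, h2, h3⟩, ⟨h4, h5⟩, h6, -⟩ := hn
  have := G.adj_comm
  rcases hp with rfl | rfl | rfl | rfl <;> rcases hq with rfl | rfl | rfl | rfl <;>
    simp_all [eq_comm]

lemma NB.col5 {a b c d e : V} (h : NB G [a, b, c, d, e]) (hn : [a, b, c, d, e].Nodup)
    (x y z t w : Bool) :
    (x = y ∧ G.Adj a b) ∨ (x = z ∧ G.Adj a c) ∨ (x = t ∧ G.Adj a d) ∨ (x = w ∧ G.Adj a e) ∨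
      (y = z ∧ G.Adj b c) ∨ (y = t ∧ G.Adj b d) ∨ (y = w ∧ G.Adj b e) ∨
      (z = t ∧ G.Adj c d) ∨ (z = w ∧ G.Adj c e) ∨ (t = w ∧ G.Adj d e) := by
  classical
  obtain ⟨p, hp, q, hq, hpq, hc⟩ := h (fun v => if v = a then x else if v = b then y else
    if v = c then z else if v = d then t else w)
  simp only [List.mem_cons, List.not_mem_nil, or_false] at hp hq
  simp only [List.nodup_cons, List.mem_cons, List.not_mem_nil, or_false, not_or] at hn
  obtain ⟨⟨h1, h2, h3, h7⟩, ⟨h4, h5, h8⟩, ⟨h6, h9⟩, h10, -⟩ := hn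
  have := G.adj_comm
  rcases hp with rfl | rfl | rfl | rfl | rfl <;> rcases hq with rfl | rfl | rfl | rfl | rfl <;>
    simp_all [eq_comm]

lemma NB.col6 {a b c d e f : V} (h : NB G [a, b, c, d, e, f]) (hn : [a, b, c, d, e, f].Nodup)
    (x y z t w u : Bool) :
    (x = y ∧ G.Adj a b) ∨ (x = z ∧ G.Adj a c) ∨ (x = t ∧ G.Adj a d) ∨ (x = w ∧ G.Adj a e) ∨
      (x = u ∧ G.Adj a f) ∨
      (y = z ∧ G.Adj b c) ∨ (y = t ∧ G.Adj b d) ∨ (y = w ∧ G.Adj b e) ∨ (y = u ∧ G.Adj b f) ∨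
      (z = t ∧ G.Adj c d) ∨ (z = w ∧ G.Adj c e) ∨ (z = u ∧ G.Adj c f) ∨
      (t = w ∧ G.Adj d e) ∨ (t = u ∧ G.Adj d f) ∨ (w = u ∧ G.Adj e f) := by
  classical
  obtain ⟨p, hp, q, hq, hpq, hc⟩ := h (fun v => if v = a then x else if v = b then y else
    if v = c then z else if v = d then t else if v = e then w else u)
  simp only [List.mem_cons, List.not_mem_nil, or_false] at hp hq
  simp only [List.nodup_cons, List.mem_cons, List.not_mem_nil, or_false, not_or] at hn
  obtain ⟨⟨h1, h2, h3, h7, h11⟩, ⟨h4, h5, h8, h12⟩, ⟨h6, h9, h13⟩, ⟨h10, h14⟩, h15, -⟩ := hn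
  have := G.adj_comm
  rcases hp with rfl | rfl | rfl | rfl | rfl | rfl <;>
    rcases hq with rfl | rfl | rfl | rfl | rfl | rfl <;> simp_all [eq_comm]

/-- In a graph without bipartite cut, a set `S` that contains all outside neighbours of a set
`X`, while some vertex lies outside `X ∪ S`, does not induce a bipartite graph. -/
lemma nb_of_noCut [Finite V] (hG : ¬ HasBipartiteCut G) (X S : List V) (x : V) (hx : x ∈ X)
    (hxS : x ∉ S) (hXS : ∀ x ∈ X, ∀ y, G.Adj x y → y ∈ X ∨ y ∈ S)
    (hc : X.length + S.length < Nat.card V) : NB G S := by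
  classical
  have := Fintype.ofFinite V
  intro c
  by_contra hno
  push Not at hno
  obtain ⟨z, hz⟩ : ∃ z, z ∉ X ++ S := by
    by_contra h
    push Not at h
    have h1 : (Finset.univ : Finset V) ⊆ (X ++ S).toFinset := fun v _ => by
      simpa using h v
    have h2 := (Finset.card_le_card h1).trans (List.toFinset_card_le _)
    rw [Finset.card_univ, ← Nat.card_eq_fintype_card, List.length_append] at h2
    omega
  rw [List.mem_append, not_or] at hz
  refine hG ((hasBipartiteCut_iff G).mpr ⟨fun v => if v ∈ S then (if c v then 2 else 3) else
    if v ∈ X then 0 else 1, ?_, ⟨x, by simp [hx, hxS]⟩, ⟨z, by simp [hz.1, hz.2]⟩⟩)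
  have key : ∀ a b, G.Adj a b → a ∉ S → b ∉ S → (a ∈ X ↔ b ∈ X) := fun a b hab ha hb =>
    ⟨fun h => (hXS a h b hab).resolve_right hb, fun h => (hXS b h a hab.symm).resolve_right ha⟩
  intro a b hab
  by_cases ha : a ∈ S <;> by_cases hb : b ∈ S
  · have := hno a ha b hb hab
    simp only [ha, hb, if_true]
    revert this
    generalize c a = p
    generalize c b = q
    revert p q; decide
  · simp only [ha, hb, if_true, if_false]
    split_ifs <;> decide
  · simp only [ha, hb, if_true, if_false]
    split_ifs <;> decide
  · simp only [ha, hb, if_false, key a b hab ha hb]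
    split_ifs <;> decide

end basics

/-! ### Reducible configurations -/

section reductions

variable {V : Type u} [Finite V] {G : SimpleGraph V}

/-- Two nonadjacent vertices have at most two common neighbours: otherwise identify them. -/
lemma Critical.f3 (hG : Critical G) {u w a b c : V} (huw : u ≠ w) (hn : ¬ G.Adj u w)
    (hab : a ≠ b) (hac : a ≠ c) (hbc : b ≠ c) (hua : G.Adj u a) (hub : G.Adj u b)
    (huc : G.Adj u c) (hwa : G.Adj w a) (hwb : G.Adj w b) (hwc : G.Adj w c) : False := by
  have hnd : [u, w, a, b, c].Nodup := by
    simp [huw, hab, hac, hbc, hua.ne, hub.ne, huc.ne, hwa.ne, hwb.ne, hwc.ne]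
  refine hG.reduce ![u, w, a, b, c] (List.nodup_ofFn.mp hnd) ∅ {1} (fun i => if i = 1 then 0 else i)
    {s(1, 2), s(1, 3), s(1, 4)} {s(0, 2), s(0, 3), s(0, 4)} ∅ (by decide) (by decide)
    (by decide) (by decide) (by have := hG.big; simpa using this) (by decide) (by decide)
    (by decide) ?_ ?_ ?_ ?_ (by simp)
  · simp [hwa, hwb, hwc]
  · simp [hua, hub, huc]
  · have hn' : ¬ G.Adj w u := fun h => hn h.symm
    intro i j _ _
    fin_cases i <;> fin_cases j <;> simp [hn, hn']
  · intro s h _ _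
    exact ⟨s, fun _ _ => rfl, fun a b hab => h a b (by simp) (by simp) hab⟩

/-- The neighbourhood of a vertex of degree at least three is not a clique: otherwise delete the
vertex. A clique does not meet both sides of a cut, so the cut extends. -/
lemma Critical.r1 (hG : Critical G) {v a b c : V} (hab : a ≠ b) (hac : a ≠ c) (hbc : b ≠ c)
    (ha : G.Adj v a) (hb : G.Adj v b) (hc : G.Adj v c)
    (hcl : ∀ y z, G.Adj v y → G.Adj v z → y ≠ z → G.Adj y z) : False := by
  classical
  have hnd : [v, a, b, c].Nodup := by
    simp [hab, hac, hbc, ha.ne, hb.ne, hc.ne]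
  refine hG.reduce ![v, a, b, c] (List.nodup_ofFn.mp hnd) {0} {0} id
    {s(0, 1), s(0, 2), s(0, 3)} ∅ ∅ (by decide) (by decide)
    (by decide) (by decide) (by have := hG.big; simpa using this) (by decide) (by decide)
    (by decide) ?_ (by simp) ?_ ?_ (by simp)
  · simp [ha, hb, hc]
  · intro i j _ _ hij
    rw [show i = j from hij]
    exact G.loopless.irrefl _
  · intro s h _ _
    simp only [Finset.mem_singleton, forall_eq, Matrix.cons_val_zero] at h
    have h01 : ∀ y z, G.Adj v y → G.Adj v z → s y = 0 → s z ≠ 1 := by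
      intro y z hy hz h0 h1
      have hne : y ≠ z := by rintro rfl; rw [h0] at h1; exact absurd h1 (by decide)
      exact (h y z hy.ne' hz.ne' (hcl y z hy hz hne)).1 ⟨h0, h1⟩
    obtain ⟨t, ht⟩ : ∃ t, ∀ y, G.Adj v y → Compat t (s y) := by
      by_cases h1 : ∃ z, G.Adj v z ∧ s z = 1
      · obtain ⟨z, hz, hz1⟩ := h1
        refine ⟨1, fun y hy => ?_⟩
        have := h01 y z hy hz
        revert this; rw [hz1]
        generalize s y = p
        revert p; decide
      · refine ⟨0, fun y hy => ?_⟩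
        have : s y ≠ 1 := fun h => h1 ⟨y, hy, h⟩
        revert this
        generalize s y = p
        revert p; decide
    refine ⟨fun y => if y = v then t else s y, fun y hy => by
      simp at hy; simp [hy], fun y z hyz => ?_⟩
    by_cases hy : y = v <;> by_cases hz : z = v
    · exact absurd (hy.trans hz.symm) hyz.ne
    · simp only [hy, hz, if_true, if_false]; exact ht z (hy ▸ hyz)
    · simp only [hy, hz, if_true, if_false]; exact (ht y (hz ▸ hyz.symm)).symm
    · simp only [hy, hz, if_false]; exact h y z hy hz hyz

/-- The case of a vertex `a` of degree five whose neighbours `b`, `v`, `c`, `e`, `f` induce the two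
triangles `b v c` and `b e f`: delete `a` and fold the two triangles together. -/
lemma Critical.r3 (hG : Critical G) (h9 : 9 ≤ Nat.card V) {a b v c e f : V}
    (hN : Nb G a [b, v, c, e, f]) (hbv : G.Adj b v) (hbc : G.Adj b c) (hbe : G.Adj b e)
    (hbf : G.Adj b f) (hvc : G.Adj v c) (hef : G.Adj e f) (hve : ¬ G.Adj v e)
    (hcf : ¬ G.Adj c f) : False := by
  classical
  have hab : G.Adj a b := by simp [hN.2]
  have hav : G.Adj a v := by simp [hN.2]
  have hac : G.Adj a c := by simp [hN.2]
  have hae : G.Adj a e := by simp [hN.2]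
  have haf : G.Adj a f := by simp [hN.2]
  have hnd : [a, b, v, c, e, f].Nodup := List.nodup_cons.mpr
    ⟨by simp [hab.ne, hav.ne, hac.ne, hae.ne, haf.ne], hN.1⟩
  refine hG.reduce ![a, b, v, c, e, f] (List.nodup_ofFn.mp hnd) {0} {0, 4, 5}
    ![0, 1, 2, 3, 2, 3]
    {s(0, 1), s(0, 2), s(0, 3), s(0, 4), s(0, 5), s(1, 4), s(1, 5), s(4, 5)}
    {s(1, 2), s(1, 3), s(2, 3)} ∅ (by decide) (by decide)
    (by decide) (by decide) (by simp; omega) (by decide) (by decide)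
    (by decide) ?_ ?_ ?_ ?_ (by simp)
  · simp [hab, hav, hac, hae, haf, hbe, hbf, hef]
  · simp [hbv, hbc, hvc]
  · have h1 : ¬ G.Adj e v := fun h => hve h.symm
    have h2 : ¬ G.Adj f c := fun h => hcf h.symm
    intro i j _ _
    fin_cases i <;> fin_cases j <;> simp [hve, hcf, h1, h2]
  · intro s h hr _
    simp only [Finset.mem_singleton, forall_eq, Matrix.cons_val_zero] at h
    have e1 : s v = s e := by simpa using hr 4 (by decide)
    have e2 : s c = s f := by simpa using hr 5 (by decide)
    have c1 := h b v hab.ne' hav.ne' hbv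
    have c2 := h b c hab.ne' hac.ne' hbc
    have c3 := h v c hav.ne' hac.ne' hvc
    obtain ⟨t, t1, t2, t3⟩ : ∃ t, Compat t (s b) ∧ Compat t (s v) ∧ Compat t (s c) := by
      revert c1 c2 c3
      generalize s b = x
      generalize s v = y
      generalize s c = z
      revert x y z; decide
    have ht : ∀ y, G.Adj a y → Compat t (s y) := by
      intro y hy
      have := (hN.2 y).mp hy
      simp only [List.mem_cons, List.not_mem_nil, or_false] at this
      rcases this with rfl | rfl | rfl | rfl | rfl
      · exact t1
      · exact t2
      · exact t3
      · rwa [← e1]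
      · rwa [← e2]
    refine ⟨fun y => if y = a then t else s y, fun y hy => by
      simp at hy; simp [hy], fun y z hyz => ?_⟩
    by_cases hy : y = a <;> by_cases hz : z = a
    · exact absurd (hy.trans hz.symm) hyz.ne
    · simp only [hy, hz, if_true, if_false]; exact ht z (hy ▸ hyz)
    · simp only [hy, hz, if_true, if_false]; exact (ht y (hz ▸ hyz.symm)).symm
    · simp only [hy, hz, if_false]; exact h y z hy hz hyz

/-- Two adjacent vertices `u`, `v` of degree five with adjacent common neighbours `w`, `x`, where the
outer neighbours form the closed walk `x p₁ p₂ q₁ q₂ x`: delete `u` and `v`, identify `w` with `p₁`,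
and join `p₂` to `x` and `q₂`. -/
lemma Critical.r4 (hG : Critical G) (h9 : 9 ≤ Nat.card V) {u v w x p₁ p₂ q₁ q₂ : V}
    (hu : Nb G u [v, w, x, p₁, p₂]) (hv : Nb G v [u, w, x, q₁, q₂])
    (hnd : [u, v, w, x, p₁, p₂, q₁, q₂].Nodup)
    (hwx : G.Adj w x) (hxp : G.Adj x p₁) (hpp : G.Adj p₁ p₂) (hpq : G.Adj p₂ q₁)
    (hqq : G.Adj q₁ q₂) (hqx : G.Adj q₂ x) (hwp : ¬ G.Adj w p₁) : False := by
  classical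
  have huv : G.Adj u v := by simp [hu.2]
  have huw : G.Adj u w := by simp [hu.2]
  have hux : G.Adj u x := by simp [hu.2]
  have hup₁ : G.Adj u p₁ := by simp [hu.2]
  have hup₂ : G.Adj u p₂ := by simp [hu.2]
  have hvw : G.Adj v w := by simp [hv.2]
  have hvx : G.Adj v x := by simp [hv.2]
  have hvq₁ : G.Adj v q₁ := by simp [hv.2]
  have hvq₂ : G.Adj v q₂ := by simp [hv.2]
  refine hG.reduce ![u, v, w, x, p₁, p₂, q₁, q₂] (List.nodup_ofFn.mp hnd) {0, 1} {0, 1, 4}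
    ![0, 1, 2, 3, 2, 5, 6, 7]
    {s(0, 1), s(0, 2), s(0, 3), s(0, 4), s(0, 5), s(1, 2), s(1, 3), s(1, 6), s(1, 7), s(3, 4)}
    {s(2, 3)} {s(3, 5), s(5, 7)} (by decide) (by decide)
    (by decide) (by decide) (by simp; omega) (by decide) (by decide)
    (by decide) ?_ ?_ ?_ ?_ (by decide)
  · simp [huv, huw, hux, hup₁, hup₂, hvw, hvx, hvq₁, hvq₂, hxp]
  · simp [hwx]
  · have h1 : ¬ G.Adj p₁ w := fun h => hwp h.symm
    intro i j hi hj hij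
    have : i = j ∨ (i = 2 ∧ j = 4) ∨ (i = 4 ∧ j = 2) := by
      revert i j; decide
    rcases this with rfl | ⟨rfl, rfl⟩ | ⟨rfl, rfl⟩
    · exact G.loopless.irrefl _
    · simpa using hwp
    · simpa using h1
  · intro s h hr hA
    have h' : ∀ a b, a ≠ u → a ≠ v → b ≠ u → b ≠ v → G.Adj a b → Compat (s a) (s b) := by
      intro a b h1 h2 h3 h4
      exact h a b (by simp [h1, h2]) (by simp [h3, h4])
    have e1 : s w = s p₁ := by simpa using hr 4 (by decide)
    have c1 : Compat (s x) (s p₂) := by simpa using hA 3 5 (by decide)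
    have c2 : Compat (s p₂) (s q₂) := by simpa using hA 5 7 (by decide)
    simp only [List.nodup_cons, List.mem_cons, List.not_mem_nil, or_false, not_or] at hnd
    obtain ⟨⟨-, n1, n2, n3, n4, n5, n6⟩, ⟨m1, m2, m3, m4, m5, m6⟩, -⟩ := hnd
    have c3 := h' w x (Ne.symm n1) (Ne.symm m1) (Ne.symm n2) (Ne.symm m2) hwx
    have c4 := h' p₁ p₂ (Ne.symm n3) (Ne.symm m3) (Ne.symm n4) (Ne.symm m4) hpp
    have c5 := h' p₂ q₁ (Ne.symm n4) (Ne.symm m4) (Ne.symm n5) (Ne.symm m5) hpq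
    have c6 := h' q₁ q₂ (Ne.symm n5) (Ne.symm m5) (Ne.symm n6) (Ne.symm m6) hqq
    have c7 := h' q₂ x (Ne.symm n6) (Ne.symm m6) (Ne.symm n2) (Ne.symm m2) hqx
    rw [← e1] at c4
    obtain ⟨t, t', k0, k1, k2, k3, k4, k5, k6, k7⟩ : ∃ t t', Compat t t' ∧
        Compat t (s w) ∧ Compat t (s x) ∧ Compat t (s p₂) ∧
        Compat t' (s w) ∧ Compat t' (s x) ∧ Compat t' (s q₁) ∧ Compat t' (s q₂) := by
      revert c1 c2 c3 c4 c5 c6 c7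
      generalize s w = y1
      generalize s x = y2
      generalize s p₂ = y3
      generalize s q₁ = y4
      generalize s q₂ = y5
      revert y1 y2 y3 y4 y5; decide
    have ht : ∀ y, G.Adj u y → y ≠ v → Compat t (s y) := by
      intro y hy hyv
      have := (hu.2 y).mp hy
      simp only [List.mem_cons, List.not_mem_nil, or_false] at this
      rcases this with rfl | rfl | rfl | rfl | rfl
      · exact absurd rfl hyv
      · exact k1
      · exact k2
      · rwa [← e1]
      · exact k3
    have ht' : ∀ y, G.Adj v y → y ≠ u → Compat t' (s y) := by
      intro y hy hyv
      have := (hv.2 y).mp hy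
      simp only [List.mem_cons, List.not_mem_nil, or_false] at this
      rcases this with rfl | rfl | rfl | rfl | rfl
      · exact absurd rfl hyv
      · exact k4
      · exact k5
      · exact k6
      · exact k7
    have hvu := huv.ne'
    refine ⟨fun y => if y = u then t else if y = v then t' else s y, fun y hy => by
      simp at hy; simp [hy], fun y z hyz => ?_⟩
    by_cases hy : y = u
    · subst hy
      by_cases hz : z = v
      · subst hz; simpa [hvu] using k0
      · simpa [hyz.ne', hz] using ht z hyz hz
    · by_cases hz : z = u
      · subst hz
        by_cases hy' : y = v
        · subst hy'; simpa [hvu] using k0.symm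
        · simpa [hyz.ne, hy'] using (ht y hyz.symm hy').symm
      · by_cases hy' : y = v
        · subst hy'
          simpa [hyz.ne', hy, hz] using ht' z hyz hz
        · by_cases hz' : z = v
          · subst hz'
            simpa [hyz.ne, hy, hz] using (ht' y hyz.symm hy).symm
          · simpa [hy, hz, hy', hz'] using h' y z hy hy' hz hz' hyz

/-- A `K₅` on `u`, `v`, `w`, `x`, `y` whose members `u`, `v`, `w` have degree five, and whose outer
neighbours `u₁`, `v₁`, `w₁` form a triangle: delete `u`, `v`, `w` and identify `x`, `y` with `u₁`,
`v₁`. -/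
lemma Critical.r5 (hG : Critical G) (h9 : 9 ≤ Nat.card V) {u v w x y u₁ v₁ w₁ : V}
    (hu : Nb G u [v, w, x, y, u₁]) (hv : Nb G v [u, w, x, y, v₁]) (hw : Nb G w [u, v, x, y, w₁])
    (hnd : [u, v, w, x, y, u₁, v₁, w₁].Nodup) (hxy : G.Adj x y) (huv₁ : G.Adj u₁ v₁)
    (huw₁ : G.Adj u₁ w₁) (hvw₁ : G.Adj v₁ w₁) (hxu : ¬ G.Adj x u₁) (hyv : ¬ G.Adj y v₁) :
    False := by
  classical
  refine hG.reduce ![u, v, w, x, y, u₁, v₁, w₁] (List.nodup_ofFn.mp hnd) {0, 1, 2} {0, 1, 2, 5, 6}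
    ![0, 1, 2, 3, 4, 3, 4, 7]
    {s(0, 1), s(0, 2), s(1, 2), s(0, 3), s(0, 4), s(1, 3), s(1, 4), s(2, 3), s(2, 4), s(0, 5),
      s(1, 6), s(2, 7), s(5, 6)}
    {s(3, 4)} ∅ (by decide) (by decide)
    (by decide) (by decide) (by simpa using h9) (by decide) (by decide)
    (by decide) ?_ ?_ ?_ ?_ (by decide)
  · simp [hu.2, hv.2, hw.2, huv₁]
  · simp [hxy]
  · have h1 : ¬ G.Adj u₁ x := fun h => hxu h.symm
    have h2 : ¬ G.Adj v₁ y := fun h => hyv h.symm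
    intro i j hi hj hij
    have : i = j ∨ (i = 3 ∧ j = 5) ∨ (i = 5 ∧ j = 3) ∨ (i = 4 ∧ j = 6) ∨ (i = 6 ∧ j = 4) := by
      revert i j; decide
    rcases this with rfl | ⟨rfl, rfl⟩ | ⟨rfl, rfl⟩ | ⟨rfl, rfl⟩ | ⟨rfl, rfl⟩
    · exact G.loopless.irrefl _
    · simpa using hxu
    · simpa using h1
    · simpa using hyv
    · simpa using h2
  · intro s h hr hA
    have h' : ∀ a b, a ≠ u → a ≠ v → a ≠ w → b ≠ u → b ≠ v → b ≠ w → G.Adj a b →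
        Compat (s a) (s b) := by
      intro a b h1 h2 h3 h4 h5 h6
      exact h a b (by simp [h1, h2, h3]) (by simp [h4, h5, h6])
    have e1 : s x = s u₁ := by simpa using hr 5 (by decide)
    have e2 : s y = s v₁ := by simpa using hr 6 (by decide)
    simp only [List.nodup_cons, List.mem_cons, List.not_mem_nil, or_false, not_or] at hnd
    obtain ⟨⟨-, -, n1, n2, n3, n4, n5⟩, ⟨-, m1, m2, m3, m4, m5⟩, ⟨l1, l2, l3, l4, l5⟩, -⟩ := hnd
    have c1 := h' x y (Ne.symm n1) (Ne.symm m1) (Ne.symm l1) (Ne.symm n2) (Ne.symm m2)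
      (Ne.symm l2) hxy
    have c2 := h' u₁ w₁ (Ne.symm n3) (Ne.symm m3) (Ne.symm l3) (Ne.symm n5) (Ne.symm m5)
      (Ne.symm l5) huw₁
    have c3 := h' v₁ w₁ (Ne.symm n4) (Ne.symm m4) (Ne.symm l4) (Ne.symm n5) (Ne.symm m5)
      (Ne.symm l5) hvw₁
    rw [← e1] at c2
    rw [← e2] at c3
    -- the triangle misses one side of the cut; `u`, `v`, `w` go to the other one
    obtain ⟨t, k0, k1, k2, k3⟩ : ∃ t, Compat t t ∧
        Compat t (s x) ∧ Compat t (s y) ∧ Compat t (s w₁) := by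
      revert c1 c2 c3
      generalize s x = y1
      generalize s y = y2
      generalize s w₁ = y3
      revert y1 y2 y3; decide
    have ht : ∀ a b, a = u ∨ a = v ∨ a = w → G.Adj a b → b = u ∨ b = v ∨ b = w ∨
        Compat t (s b) := by
      have k4 : Compat t (s u₁) := e1 ▸ k1
      have k5 : Compat t (s v₁) := e2 ▸ k2
      rintro a b (ha | ha | ha) hab <;> rw [ha] at hab
      · have := (hu.2 b).mp hab
        simp only [List.mem_cons, List.not_mem_nil, or_false] at this
        rcases this with h | h | h | h | h
        · exact Or.inr (Or.inl h)
        · exact Or.inr (Or.inr (Or.inl h))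
        all_goals (rw [h]; exact Or.inr (Or.inr (Or.inr (by assumption))))
      · have := (hv.2 b).mp hab
        simp only [List.mem_cons, List.not_mem_nil, or_false] at this
        rcases this with h | h | h | h | h
        · exact Or.inl h
        · exact Or.inr (Or.inr (Or.inl h))
        all_goals (rw [h]; exact Or.inr (Or.inr (Or.inr (by assumption))))
      · have := (hw.2 b).mp hab
        simp only [List.mem_cons, List.not_mem_nil, or_false] at this
        rcases this with h | h | h | h | h
        · exact Or.inl h
        · exact Or.inr (Or.inl h)
        all_goals (rw [h]; exact Or.inr (Or.inr (Or.inr (by assumption))))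
    refine ⟨fun y => if y = u ∨ y = v ∨ y = w then t else s y, fun y hy => by
      simp at hy; simp [hy], fun y z hyz => ?_⟩
    by_cases hy : y = u ∨ y = v ∨ y = w <;> by_cases hz : z = u ∨ z = v ∨ z = w
    · simp only [hy, hz, if_true]; exact k0
    · simp only [hy, hz, if_true, if_false]
      have := ht y z hy hyz
      tauto
    · simp only [hy, hz, if_true, if_false]
      have := ht z y hz hyz.symm
      apply Compat.symm
      tauto
    · simp only [hy, hz, if_false]
      push Not at hy hz
      exact h' y z hy.1 hy.2.1 hy.2.2 hz.1 hz.2.1 hz.2.2 hyz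

end reductions

/-! ### Vertices of degree four -/

section smallDegrees

variable {V : Type u} [Finite V] {G : SimpleGraph V}

/-- The neighbourhood of a vertex is not bipartite. -/
lemma Critical.nb_nbhd (hG : Critical G) {v : V} {l : List V} (h : Nb G v l)
    (hl : l.length + 1 < Nat.card V) : NB G l := by
  refine nb_of_noCut hG.noCut [v] l v (by simp) ?_ ?_ (by simp; omega)
  · rw [← h.2]; exact G.loopless.irrefl _
  · intro x hx y hxy
    rw [List.mem_singleton.mp hx] at hxy
    exact Or.inr ((h.2 y).mp hxy)

lemma Critical.four_le (hG : Critical G) {v : V} {l : List V} (h : Nb G v l) : 4 ≤ l.length := by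
  by_contra hlt
  have hb := hG.big
  have hNB := hG.nb_nbhd h (by omega)
  match l, h, hNB, hlt with
  | [], _, hNB, _ => exact not_NB_nil hNB
  | [a], _, hNB, _ => exact not_NB_one hNB
  | [a, b], _, hNB, _ => exact not_NB_two hNB
  | [a, b, c], h, hNB, _ =>
    obtain ⟨h1, h2, h3⟩ := hNB.three
    have hm : ∀ y, G.Adj v y ↔ y = a ∨ y = b ∨ y = c := by simpa using h.2
    refine hG.r1 h1.ne h2.ne h3.ne ((hm a).2 (by simp)) ((hm b).2 (by simp)) ((hm c).2 (by simp)) ?_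
    intro y z hy hz hyz
    rcases (hm y).1 hy with rfl | rfl | rfl <;> rcases (hm z).1 hz with rfl | rfl | rfl <;>
      first | exact absurd rfl hyz | assumption | (apply SimpleGraph.Adj.symm; assumption)
  | _ :: _ :: _ :: _ :: l, _, _, hlt => simp at hlt

/-- A vertex `p` nonadjacent to `v` with common neighbour `u` has at most one further neighbour
in the neighbourhood of `v`. -/
lemma Critical.outer (hG : Critical G) {p v u : V} (hpv : p ≠ v) (hn : ¬ G.Adj p v)
    (hpu : G.Adj p u) (hvu : G.Adj v u) {a b : V} (ha : G.Adj v a) (hb : G.Adj v b)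
    (hau : a ≠ u) (hbu : b ≠ u) (hpa : G.Adj p a) (hpb : G.Adj p b) : a = b := by
  by_contra hab
  exact hG.f3 hpv hn hab hau hbu hpa hpb hpu ha hb hvu

/-- Every vertex of degree four lies in a `K₄`. -/
lemma Critical.l2 (hG : Critical G) (h8 : 8 ≤ Nat.card V) {v : V} (h : Dg G v 4) :
    ∃ a b c d, Nb G v [a, b, c, d] ∧ G.Adj a b ∧ G.Adj a c ∧ G.Adj b c := by
  obtain ⟨l, hl, hlen⟩ := h
  obtain ⟨a, b, c, d, rfl⟩ : ∃ a b c d, l = [a, b, c, d] := by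
    match l, hlen with
    | [a, b, c, d], _ => exact ⟨a, b, c, d, rfl⟩
  have hNB := hG.nb_nbhd hl (by omega)
  have hc := hNB.col4 hl.1
  have k1 := hc true true true true
  have k2 := hc true true true false
  have k3 := hc true true false true
  have k4 := hc true false true true
  have k5 := hc false true true true
  have k6 := hc true true false false
  have k7 := hc true false true false
  have k8 := hc true false false true
  simp only [true_and, reduceCtorEq, false_and, false_or, or_false] at k1 k2 k3 k4 k5 k6 k7 k8
  have sy : ∀ x y, G.Adj x y → G.Adj y x := fun _ _ h => h.symm
  have key : (G.Adj a b ∧ G.Adj a c ∧ G.Adj b c) ∨ (G.Adj a b ∧ G.Adj a d ∧ G.Adj b d) ∨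
      (G.Adj a c ∧ G.Adj a d ∧ G.Adj c d) ∨ (G.Adj b c ∧ G.Adj b d ∧ G.Adj c d) := by
    clear hc hNB sy
    grind
  rcases key with h | h | h | h
  · exact ⟨a, b, c, d, hl, h⟩
  · exact ⟨a, b, d, c, hl.re, h⟩
  · exact ⟨a, c, d, b, hl.re, h⟩
  · exact ⟨b, c, d, a, hl.re, h⟩

/-- If `v` has degree four and three of its neighbours form a triangle, then the fourth one is
adjacent to at most one of them. -/
lemma Critical.l2' (hG : Critical G) {v a b c d : V} (hv : Nb G v [a, b, c, d])
    (hab : G.Adj a b) (hac : G.Adj a c) (hbc : G.Adj b c) :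
    ¬ (G.Adj d a ∧ G.Adj d b) ∧ ¬ (G.Adj d a ∧ G.Adj d c) ∧ ¬ (G.Adj d b ∧ G.Adj d c) := by
  have sy : ∀ x y, G.Adj x y → G.Adj y x := fun _ _ h => h.symm
  have hn := hv.1
  have hm : ∀ y, G.Adj v y ↔ y = a ∨ y = b ∨ y = c ∨ y = d := by simpa using hv.2
  simp only [List.nodup_cons, List.mem_cons, List.not_mem_nil, or_false, not_or] at hn
  obtain ⟨⟨h1, h2, h3⟩, ⟨h4, h5⟩, h6, -⟩ := hn
  have va : G.Adj v a := by simp [hm]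
  have vb : G.Adj v b := by simp [hm]
  have vc : G.Adj v c := by simp [hm]
  have vd : G.Adj v d := by simp [hm]
  have hall : ¬ (G.Adj d a ∧ G.Adj d b ∧ G.Adj d c) := by
    rintro ⟨da, db, dc⟩
    refine hG.r1 h1 h2 h4 va vb vc ?_
    intro y z hy hz hyz
    rcases (hm y).1 hy with rfl | rfl | rfl | rfl <;>
      rcases (hm z).1 hz with rfl | rfl | rfl | rfl <;>
      first | exact absurd rfl hyz | assumption | (apply SimpleGraph.Adj.symm; assumption)
  refine ⟨fun h => ?_, fun h => ?_, fun h => ?_⟩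
  · exact hG.f3 (Ne.symm h6) (fun h' => hall ⟨h.1, h.2, h'⟩) h1 va.ne' vb.ne' h.1 h.2 vd.symm
      hac.symm hbc.symm vc.symm
  · exact hG.f3 (Ne.symm h5) (fun h' => hall ⟨h.1, h', h.2⟩) h2 va.ne' vc.ne' h.1 h.2 vd.symm
      hab.symm hbc vb.symm
  · exact hG.f3 (Ne.symm h3) (fun h' => hall ⟨h', h.1, h.2⟩) h4 vb.ne' vc.ne' h.1 h.2 vd.symm
      hab hac va.symm

/-- No `K₄` contains two vertices of degree four. -/
lemma Critical.l3 (hG : Critical G) (h8 : 8 ≤ Nat.card V) {v a b c : V} (hv : Dg G v 4)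
    (ha : Dg G a 4) (va : G.Adj v a) (vb : G.Adj v b) (vc : G.Adj v c) (ab : G.Adj a b)
    (ac : G.Adj a c) (bc : G.Adj b c) : False := by
  have sy : ∀ x y, G.Adj x y → G.Adj y x := fun _ _ h => h.symm
  obtain ⟨d, hd⟩ := hv.four (by simp [ab.ne, ac.ne, bc.ne]) va vb vc
  obtain ⟨e, he⟩ := ha.four (by simp [vb.ne, vc.ne, bc.ne]) va.symm ab ac
  have nd := hd.1
  have ne := he.1
  have md : ∀ y, G.Adj v y ↔ y = a ∨ y = b ∨ y = c ∨ y = d := by simpa using hd.2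
  have me : ∀ y, G.Adj a y ↔ y = v ∨ y = b ∨ y = c ∨ y = e := by simpa using he.2
  have hL2 := hG.l2' hd ab ac bc
  simp only [List.nodup_cons, List.mem_cons, List.not_mem_nil, or_false, not_or] at nd ne
  have va' := va.ne
  by_cases hde : d = e
  · subst hde
    have := nb_of_noCut hG.noCut [v, a] [d, b, c] v (by simp) (by grind) (by grind)
      (by simp; omega)
    exact not_NB_two (this.peel (by grind))
  · have := nb_of_noCut hG.noCut [v, a] [d, e, b, c] v (by simp) (by grind) (by grind)
      (by simp; omega)
    have hda : ¬ G.Adj d a := by grind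
    have vd : G.Adj v d := by simp [md]
    have ae : G.Adj a e := by simp [me]
    have ae' := ae.ne
    have hev : ¬ G.Adj e v := fun h => by
      have := (md e).1 h.symm
      grind
    have o1 : ∀ x y, G.Adj a x → G.Adj a y → x ≠ v → y ≠ v → G.Adj d x → G.Adj d y → x = y :=
      fun x y => hG.outer (by grind) hda vd.symm va.symm
    have o2 : ∀ x y, G.Adj v x → G.Adj v y → x ≠ a → y ≠ a → G.Adj e x → G.Adj e y → x = y :=
      fun x y => hG.outer (by grind) hev ae.symm va
    refine not_NB_two ((this.peel ?_).peel ?_)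
    · intro x hx y hy
      simp only [List.mem_cons, List.not_mem_nil, or_false] at hx hy
      exact o1 x y (by grind) (by grind) (by grind) (by grind)
    · intro x hx y hy
      simp only [List.mem_cons, List.not_mem_nil, or_false] at hx hy
      exact o2 x y (by grind) (by grind) (by grind) (by grind)

/-- No `K₄` contains a vertex of degree four and one of degree five. -/
lemma Critical.l4 (hG : Critical G) (h9 : 9 ≤ Nat.card V) {v a b c : V} (hv : Dg G v 4)
    (ha : Dg G a 5) (va : G.Adj v a) (vb : G.Adj v b) (vc : G.Adj v c) (ab : G.Adj a b)
    (ac : G.Adj a c) (bc : G.Adj b c) : False := by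
  have sy : ∀ x y, G.Adj x y → G.Adj y x := fun _ _ h => h.symm
  obtain ⟨d, hd⟩ := hv.four (by simp [ab.ne, ac.ne, bc.ne]) va vb vc
  have nd := hd.1
  have md : ∀ y, G.Adj v y ↔ y = a ∨ y = b ∨ y = c ∨ y = d := by simpa using hd.2
  have hL2 := hG.l2' hd ab ac bc
  have vd : G.Adj v d := by simp [md]
  simp only [List.nodup_cons, List.mem_cons, List.not_mem_nil, or_false, not_or] at nd
  have va' := va.ne
  -- an outer neighbour of `a` that is not a neighbour of `v` has at most one neighbour in `N(v)`
  have out : ∀ f, G.Adj a f → f ≠ v → f ≠ b → f ≠ c → f ≠ d → ∀ x y, G.Adj v x → G.Adj v y →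
      x ≠ a → y ≠ a → G.Adj f x → G.Adj f y → x = y := by
    intro f af h1 h2 h3 h4 x y
    have := af.ne
    exact hG.outer h1 (by grind) af.symm va
  by_cases hda : G.Adj a d
  · obtain ⟨f, hf⟩ := ha.five' (a := v) (b := b) (c := c) (d := d) (by
      have := vd.ne; have := vb.ne; have := vc.ne; simp; grind) va.symm ab ac hda
    have nf := hf.1
    have mf : ∀ y, G.Adj a y ↔ y = v ∨ y = b ∨ y = c ∨ y = d ∨ y = f := by simpa using hf.2
    simp only [List.nodup_cons, List.mem_cons, List.not_mem_nil, or_false, not_or] at nf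
    have := nb_of_noCut hG.noCut [v, a] [f, d, b, c] v (by simp) (by grind) (by grind)
      (by simp; omega)
    have o := out f (by simp [mf]) (by grind) (by grind) (by grind) (by grind)
    refine not_NB_two ((this.peel ?_).peel ?_)
    · intro x hx y hy
      simp only [List.mem_cons, List.not_mem_nil, or_false] at hx hy
      exact o x y (by grind) (by grind) (by grind) (by grind)
    · grind
  · obtain ⟨e, f, hf⟩ := ha.five (a := v) (b := b) (c := c) (by
      have := vb.ne; have := vc.ne; simp; grind) va.symm ab ac
    have nf := hf.1
    have mf : ∀ y, G.Adj a y ↔ y = v ∨ y = b ∨ y = c ∨ y = e ∨ y = f := by simpa using hf.2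
    simp only [List.nodup_cons, List.mem_cons, List.not_mem_nil, or_false, not_or] at nf
    have := nb_of_noCut hG.noCut [v, a] [d, b, c, e, f] v (by simp) (by grind) (by grind)
      (by simp; omega)
    have oe := out e (by simp [mf]) (by grind) (by grind) (by grind) (by grind)
    have of := out f (by simp [mf]) (by grind) (by grind) (by grind) (by grind)
    have od : ∀ x y, G.Adj a x → G.Adj a y → x ≠ v → y ≠ v → G.Adj d x → G.Adj d y → x = y :=
      fun x y => hG.outer (by grind) (by grind) vd.symm va.symm
    have hNB : NB G [b, c, e, f] := by
      refine this.peel ?_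
      intro x hx y hy
      simp only [List.mem_cons, List.not_mem_nil, or_false] at hx hy
      exact od x y (by grind) (by grind) (by grind) (by grind)
    have e1 : ¬ (G.Adj e b ∧ G.Adj e c) := fun h =>
      bc.ne (oe b c vb vc (by grind) (by grind) h.1 h.2)
    have f1 : ¬ (G.Adj f b ∧ G.Adj f c) := fun h =>
      bc.ne (of b c vb vc (by grind) (by grind) h.1 h.2)
    have hc := hNB.col4 (by simp; grind)
    have k1 := hc true false true true
    have k2 := hc true false true false
    have k3 := hc true false false true
    have k4 := hc true false false false
    simp only [true_and, reduceCtorEq, false_and, false_or, or_false] at k1 k2 k3 k4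
    have ef : G.Adj e f := by
      by_contra hef
      refine not_NB_two (NB.peel (l := [b, c]) (p := e)
        (NB.peel (l := [e, b, c]) (p := f) (hNB.mono (by simp)) ?_) ?_)
      · simp only [List.mem_cons, List.not_mem_nil, or_false]; grind
      · simp only [List.mem_cons, List.not_mem_nil, or_false]; grind
    have key : (G.Adj b e ∧ G.Adj b f) ∨ (G.Adj c e ∧ G.Adj c f) := by grind
    rcases key with ⟨h1, h2⟩ | ⟨h1, h2⟩
    · exact hG.r3 h9 (hf.re : Nb G a [b, v, c, e, f]) vb.symm bc h1 h2 vc ef (by grind)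
        (by grind)
    · exact hG.r3 h9 (hf.re : Nb G a [c, v, b, e, f]) vc.symm bc.symm h1 h2 vb ef
        (by grind) (by grind)

end smallDegrees

/-! ### Adjacent vertices of degree five -/

section adjacentFives

variable {V : Type u} [Finite V] {G : SimpleGraph V}

/-- If `v` has degree five and lies in the clique `v, u, w, x`, the two remaining neighbours of `v`
do not form a triangle with `w`. -/
lemma Critical.noTri (hG : Critical G) (h9 : 9 ≤ Nat.card V) {u v w x q₁ q₂ : V}
    (hv : Nb G v [u, w, x, q₁, q₂]) (uw : G.Adj u w) (ux : G.Adj u x) (wx : G.Adj w x)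
    (n1 : ¬ G.Adj q₁ u) (n2 : ¬ G.Adj q₂ u) (qq : G.Adj q₁ q₂) (qw : G.Adj q₁ w)
    (qw' : G.Adj q₂ w) : False := by
  have nv := hv.1
  have mv : ∀ y, G.Adj v y ↔ y = u ∨ y = w ∨ y = x ∨ y = q₁ ∨ y = q₂ := by simpa using hv.2
  simp only [List.nodup_cons, List.mem_cons, List.not_mem_nil, or_false, not_or] at nv
  have hx : ¬ G.Adj x q₂ := fun h =>
    hG.f3 (u := u) (w := q₂) (a := w) (b := x) (c := v) (by grind) (fun h => n2 h.symm) wx.ne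
      (by have := (mv w).2 (by simp); exact this.ne') (by have := (mv x).2 (by simp); exact this.ne')
      uw ux ((mv u).2 (by simp)).symm qw' h.symm ((mv q₂).2 (by simp)).symm
  exact hG.r3 h9 (hv.re : Nb G v [w, u, x, q₁, q₂]) uw.symm wx qw.symm qw'.symm ux qq
    (fun h => n1 h.symm) hx

/-- In the situation of `noTri`, if neither `q₁` nor `q₂` has two neighbours among `w`, `x`, then
`w, x, q₁, q₂` induce a bipartite graph. -/
lemma Critical.noFour (hG : Critical G) (h9 : 9 ≤ Nat.card V) {u v w x q₁ q₂ : V}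
    (hv : Nb G v [u, w, x, q₁, q₂]) (uw : G.Adj u w) (ux : G.Adj u x) (wx : G.Adj w x)
    (n1 : ¬ G.Adj q₁ u) (n2 : ¬ G.Adj q₂ u) (m1 : ¬ (G.Adj q₁ w ∧ G.Adj q₁ x))
    (m2 : ¬ (G.Adj q₂ w ∧ G.Adj q₂ x)) : ¬ NB G [w, x, q₁, q₂] := by
  intro hNB
  have sy : ∀ x y, G.Adj x y → G.Adj y x := fun _ _ h => h.symm
  have nv := hv.1
  simp only [List.nodup_cons, List.mem_cons, List.not_mem_nil, or_false, not_or] at nv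
  have qq : G.Adj q₁ q₂ := by
    by_contra hqq
    refine not_NB_two (NB.peel (l := [w, x]) (p := q₁)
        (NB.peel (l := [q₁, w, x]) (p := q₂) (hNB.mono (by simp)) ?_) ?_)
    · simp only [List.mem_cons, List.not_mem_nil, or_false]; grind
    · simp only [List.mem_cons, List.not_mem_nil, or_false]; grind
  have t1 := hG.noTri h9 hv uw ux wx n1 n2 qq
  have t2 := hG.noTri h9 (hv.re : Nb G v [u, x, w, q₁, q₂]) ux uw wx.symm n1 n2 qq
  have hc := hNB.col4 (by simp; grind)
  have k1 := hc true false true false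
  have k2 := hc true false false true
  simp only [true_and, reduceCtorEq, false_and, false_or, or_false] at k1 k2
  clear hc hNB hv
  grind

/-- Two adjacent vertices `u`, `v` of degree five with adjacent common neighbours `w`, `x` have a
further common neighbour. Otherwise the four outer neighbours together with `w`, `x` separate
`u, v` from the rest, and the reductions leave no odd cycle among them. -/
lemma Critical.l5_aux (hG : Critical G) (h9 : 9 ≤ Nat.card V) {u v w x p₁ p₂ q₁ q₂ : V}
    (hu : Nb G u [v, w, x, p₁, p₂]) (hv : Nb G v [u, w, x, q₁, q₂]) (wx : G.Adj w x)
    (hnd : [u, v, w, x, p₁, p₂, q₁, q₂].Nodup) : False := by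
  have sy : ∀ x y, G.Adj x y → G.Adj y x := fun _ _ h => h.symm
  have mu : ∀ y, G.Adj u y ↔ y = v ∨ y = w ∨ y = x ∨ y = p₁ ∨ y = p₂ := by simpa using hu.2
  have mv : ∀ y, G.Adj v y ↔ y = u ∨ y = w ∨ y = x ∨ y = q₁ ∨ y = q₂ := by simpa using hv.2
  have nd := hnd
  simp only [List.nodup_cons, List.mem_cons, List.not_mem_nil, or_false, not_or] at nd
  have uv : G.Adj u v := by simp [mu]
  have uw : G.Adj u w := by simp [mu]
  have ux : G.Adj u x := by simp [mu]
  have vw : G.Adj v w := by simp [mv]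
  have vx : G.Adj v x := by simp [mv]
  have up₁ : G.Adj u p₁ := by simp [mu]
  have up₂ : G.Adj u p₂ := by simp [mu]
  have vq₁ : G.Adj v q₁ := by simp [mv]
  have vq₂ : G.Adj v q₂ := by simp [mv]
  have np₁ : ¬ G.Adj p₁ v := fun h => by have := (mv p₁).1 h.symm; grind
  have np₂ : ¬ G.Adj p₂ v := fun h => by have := (mv p₂).1 h.symm; grind
  have nq₁ : ¬ G.Adj q₁ u := fun h => by have := (mu q₁).1 h.symm; grind
  have nq₂ : ¬ G.Adj q₂ u := fun h => by have := (mu q₂).1 h.symm; grind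
  have op₁ : ∀ y z, G.Adj v y → G.Adj v z → y ≠ u → z ≠ u → G.Adj p₁ y → G.Adj p₁ z → y = z :=
    fun y z => hG.outer (by grind) np₁ up₁.symm uv.symm
  have op₂ : ∀ y z, G.Adj v y → G.Adj v z → y ≠ u → z ≠ u → G.Adj p₂ y → G.Adj p₂ z → y = z :=
    fun y z => hG.outer (by grind) np₂ up₂.symm uv.symm
  have oq₁ : ∀ y z, G.Adj u y → G.Adj u z → y ≠ v → z ≠ v → G.Adj q₁ y → G.Adj q₁ z → y = z :=
    fun y z => hG.outer (by grind) nq₁ vq₁.symm uv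
  have oq₂ : ∀ y z, G.Adj u y → G.Adj u z → y ≠ v → z ≠ v → G.Adj q₂ y → G.Adj q₂ z → y = z :=
    fun y z => hG.outer (by grind) nq₂ vq₂.symm uv
  have P1 : ∀ y z, (y = w ∨ y = x ∨ y = q₁ ∨ y = q₂) → (z = w ∨ z = x ∨ z = q₁ ∨ z = q₂) →
      G.Adj p₁ y → G.Adj p₁ z → y = z := fun y z hy hz =>
    op₁ y z ((mv y).2 (Or.inr hy)) ((mv z).2 (Or.inr hz)) (by grind) (by grind)
  have P2 : ∀ y z, (y = w ∨ y = x ∨ y = q₁ ∨ y = q₂) → (z = w ∨ z = x ∨ z = q₁ ∨ z = q₂) →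
      G.Adj p₂ y → G.Adj p₂ z → y = z := fun y z hy hz =>
    op₂ y z ((mv y).2 (Or.inr hy)) ((mv z).2 (Or.inr hz)) (by grind) (by grind)
  have Q1 : ∀ y z, (y = w ∨ y = x ∨ y = p₁ ∨ y = p₂) → (z = w ∨ z = x ∨ z = p₁ ∨ z = p₂) →
      G.Adj q₁ y → G.Adj q₁ z → y = z := fun y z hy hz =>
    oq₁ y z ((mu y).2 (Or.inr hy)) ((mu z).2 (Or.inr hz)) (by grind) (by grind)
  have Q2 : ∀ y z, (y = w ∨ y = x ∨ y = p₁ ∨ y = p₂) → (z = w ∨ z = x ∨ z = p₁ ∨ z = p₂) →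
      G.Adj q₂ y → G.Adj q₂ z → y = z := fun y z hy hz =>
    oq₂ y z ((mu y).2 (Or.inr hy)) ((mu z).2 (Or.inr hz)) (by grind) (by grind)
  clear op₁ op₂ oq₁ oq₂
  have hNB := nb_of_noCut hG.noCut [u, v] [w, x, p₁, p₂, q₁, q₂] u (by simp) (by grind)
    (by intro a ha y hy; simp only [List.mem_cons, List.not_mem_nil, or_false] at ha
        rcases ha with rfl | rfl
        · have := (mu y).1 hy; simp; grind
        · have := (mv y).1 hy; simp; grind) (by simp; omega)
  have wxn := wx.ne
  have pp : G.Adj p₁ p₂ := by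
    by_contra h
    refine hG.noFour h9 hv uw ux wx nq₁ nq₂ (fun h => wxn (Q1 w x (by simp) (by simp) h.1 h.2))
      (fun h => wxn (Q2 w x (by simp) (by simp) h.1 h.2)) ?_
    refine NB.peel (p := p₂) (NB.peel (p := p₁) (hNB.mono (by simp)) ?_) ?_
    · intro y hy z hz
      simp only [List.mem_cons, List.not_mem_nil, or_false] at hy hz
      intro h1 h2
      exact P1 y z (by grind) (by grind) h1 h2
    · intro y hy z hz
      simp only [List.mem_cons, List.not_mem_nil, or_false] at hy hz
      exact P2 y z hy hz
  have qq : G.Adj q₁ q₂ := by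
    by_contra h
    refine hG.noFour h9 hu vw vx wx np₁ np₂ (fun h => wxn (P1 w x (by simp) (by simp) h.1 h.2))
      (fun h => wxn (P2 w x (by simp) (by simp) h.1 h.2)) ?_
    refine NB.peel (p := q₂) (NB.peel (p := q₁) (hNB.mono (by simp)) ?_) ?_
    · intro y hy z hz
      simp only [List.mem_cons, List.not_mem_nil, or_false] at hy hz
      intro h1 h2
      exact Q1 y z (by grind) (by grind) h1 h2
    · intro y hy z hz
      simp only [List.mem_cons, List.not_mem_nil, or_false] at hy hz
      exact Q2 y z hy hz
  have t1 := hG.noTri h9 hv uw ux wx nq₁ nq₂ qq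
  have t2 := hG.noTri h9 (hv.re : Nb G v [u, x, w, q₁, q₂]) ux uw wx.symm nq₁ nq₂ qq
  have t3 := hG.noTri h9 hu vw vx wx np₁ np₂ pp
  have t4 := hG.noTri h9 (hu.re : Nb G u [v, x, w, p₁, p₂]) vx vw wx.symm np₁ np₂ pp
  have hc := hNB.col6 (by simp; grind)
  have k1 := hc true false true false true false
  have k2 := hc true false true false false true
  have k3 := hc true false false true true false
  have k4 := hc true false false true false true
  simp only [true_and, reduceCtorEq, false_and, false_or, or_false] at k1 k2 k3 k4
  clear hc hNB
  -- a five-cycle through `x` (or `w`) and all four outer neighbours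
  have five : ∀ a b p p' q q', (a = w ∧ b = x ∨ a = x ∧ b = w) → (p = p₁ ∧ p' = p₂ ∨ p = p₂ ∧ p' = p₁) →
      (q = q₁ ∧ q' = q₂ ∨ q = q₂ ∧ q' = q₁) → G.Adj b p → G.Adj p' q → G.Adj q' b → False := by
    intro a b p p' q q' hab hp hq h1 h2 h3
    have hap : ¬ G.Adj a p := by
      intro h
      rcases hp with ⟨rfl, rfl⟩ | ⟨rfl, rfl⟩
      · have := P1 a b (by grind) (by grind) h.symm h1.symm; grind
      · have := P2 a b (by grind) (by grind) h.symm h1.symm; grind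
    have ab : G.Adj a b := by rcases hab with ⟨rfl, rfl⟩ | ⟨rfl, rfl⟩ <;> [exact wx; exact wx.symm]
    have pp' : G.Adj p p' := by rcases hp with ⟨rfl, rfl⟩ | ⟨rfl, rfl⟩ <;> [exact pp; exact pp.symm]
    have qq' : G.Adj q q' := by rcases hq with ⟨rfl, rfl⟩ | ⟨rfl, rfl⟩ <;> [exact qq; exact qq.symm]
    refine hG.r4 h9 (u := u) (v := v) (w := a) (x := b) (p₁ := p) (p₂ := p') (q₁ := q) (q₂ := q')
      (hu.re ?_ ?_) (hv.re ?_ ?_) ?_ ab h1 pp' h2 qq' h3 hap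
    · rcases hab with ⟨rfl, rfl⟩ | ⟨rfl, rfl⟩ <;> rcases hp with ⟨rfl, rfl⟩ | ⟨rfl, rfl⟩ <;> simp
    · simp
    · rcases hab with ⟨rfl, rfl⟩ | ⟨rfl, rfl⟩ <;> rcases hq with ⟨rfl, rfl⟩ | ⟨rfl, rfl⟩ <;> simp
    · simp
    · rcases hab with ⟨rfl, rfl⟩ | ⟨rfl, rfl⟩ <;> rcases hp with ⟨rfl, rfl⟩ | ⟨rfl, rfl⟩ <;>
        rcases hq with ⟨rfl, rfl⟩ | ⟨rfl, rfl⟩ <;>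
        simp only [List.nodup_cons, List.mem_cons, List.not_mem_nil, or_false, not_or] <;> grind
  have f1 := five w x p₁ p₂ q₁ q₂ (by simp) (by simp) (by simp)
  have f2 := five w x p₁ p₂ q₂ q₁ (by simp) (by simp) (by simp)
  have f3 := five w x p₂ p₁ q₁ q₂ (by simp) (by simp) (by simp)
  have f4 := five w x p₂ p₁ q₂ q₁ (by simp) (by simp) (by simp)
  have g1 := five x w p₁ p₂ q₁ q₂ (by simp) (by simp) (by simp)
  have g2 := five x w p₁ p₂ q₂ q₁ (by simp) (by simp) (by simp)
  have g3 := five x w p₂ p₁ q₁ q₂ (by simp) (by simp) (by simp)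
  have g4 := five x w p₂ p₁ q₂ q₁ (by simp) (by simp) (by simp)
  have e1 : ∀ a b, a ≠ b → (a = w ∨ a = x ∨ a = q₁ ∨ a = q₂) → (b = w ∨ b = x ∨ b = q₁ ∨ b = q₂) →
      ¬ (G.Adj p₁ a ∧ G.Adj p₁ b) := fun a b h ha hb hh => h (P1 a b ha hb hh.1 hh.2)
  have e2 : ∀ a b, a ≠ b → (a = w ∨ a = x ∨ a = q₁ ∨ a = q₂) → (b = w ∨ b = x ∨ b = q₁ ∨ b = q₂) →
      ¬ (G.Adj p₂ a ∧ G.Adj p₂ b) := fun a b h ha hb hh => h (P2 a b ha hb hh.1 hh.2)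
  have e3 : ∀ a b, a ≠ b → (a = w ∨ a = x ∨ a = p₁ ∨ a = p₂) → (b = w ∨ b = x ∨ b = p₁ ∨ b = p₂) →
      ¬ (G.Adj q₁ a ∧ G.Adj q₁ b) := fun a b h ha hb hh => h (Q1 a b ha hb hh.1 hh.2)
  have e4 : ∀ a b, a ≠ b → (a = w ∨ a = x ∨ a = p₁ ∨ a = p₂) → (b = w ∨ b = x ∨ b = p₁ ∨ b = p₂) →
      ¬ (G.Adj q₂ a ∧ G.Adj q₂ b) := fun a b h ha hb hh => h (Q2 a b ha hb hh.1 hh.2)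
  obtain ⟨⟨a1, a2, a3, a4, a5, a6, a7⟩, ⟨a8, a9, a10, a11, a12, a13⟩, ⟨a14, a15, a16, a17, a18⟩,
    ⟨a19, a20, a21, a22⟩, ⟨a23, a24, a25⟩, ⟨a26, a27⟩, a28, -⟩ := nd
  have E1 := e1 w x wxn (by simp) (by simp)
  have E2 := e1 w q₁ (by grind) (by simp) (by simp)
  have E3 := e1 w q₂ (by grind) (by simp) (by simp)
  have E4 := e1 x q₁ (by grind) (by simp) (by simp)
  have E5 := e1 x q₂ (by grind) (by simp) (by simp)
  have E6 := e1 q₁ q₂ (by grind) (by simp) (by simp)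
  have F1 := e2 w x wxn (by simp) (by simp)
  have F2 := e2 w q₁ (by grind) (by simp) (by simp)
  have F3 := e2 w q₂ (by grind) (by simp) (by simp)
  have F4 := e2 x q₁ (by grind) (by simp) (by simp)
  have F5 := e2 x q₂ (by grind) (by simp) (by simp)
  have F6 := e2 q₁ q₂ (by grind) (by simp) (by simp)
  have G1 := e3 w x wxn (by simp) (by simp)
  have G2 := e3 w p₁ (by grind) (by simp) (by simp)
  have G3 := e3 w p₂ (by grind) (by simp) (by simp)
  have G4 := e3 x p₁ (by grind) (by simp) (by simp)
  have G5 := e3 x p₂ (by grind) (by simp) (by simp)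
  have G6 := e3 p₁ p₂ (by grind) (by simp) (by simp)
  have H1 := e4 w x wxn (by simp) (by simp)
  have H2 := e4 w p₁ (by grind) (by simp) (by simp)
  have H3 := e4 w p₂ (by grind) (by simp) (by simp)
  have H4 := e4 x p₁ (by grind) (by simp) (by simp)
  have H5 := e4 x p₂ (by grind) (by simp) (by simp)
  have H6 := e4 p₁ p₂ (by grind) (by simp) (by simp)
  clear e1 e2 e3 e4 P1 P2 Q1 Q2 five mu mv hu hv hnd sy
  simp only [G.adj_comm p₁ w, G.adj_comm p₂ w, G.adj_comm q₁ w, G.adj_comm q₂ w, G.adj_comm p₁ x,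
    G.adj_comm p₂ x, G.adj_comm q₁ x, G.adj_comm q₂ x, G.adj_comm q₁ p₁, G.adj_comm q₂ p₁,
    G.adj_comm q₁ p₂, G.adj_comm q₂ p₂] at *
  grind

/-- A `K₄` containing two vertices of degree five extends to a `K₅`. -/
lemma Critical.l5 (hG : Critical G) (h9 : 9 ≤ Nat.card V) {u v w x : V} (hu : Dg G u 5)
    (hv : Dg G v 5) (uv : G.Adj u v) (uw : G.Adj u w) (ux : G.Adj u x) (vw : G.Adj v w)
    (vx : G.Adj v x) (wx : G.Adj w x) :
    ∃ y, G.Adj u y ∧ G.Adj v y ∧ G.Adj w y ∧ G.Adj x y := by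
  by_contra hno
  push Not at hno
  have sy : ∀ x y, G.Adj x y → G.Adj y x := fun _ _ h => h.symm
  have nn := uv.ne
  have nn1 := uw.ne
  have nn2 := ux.ne
  have nn3 := vw.ne
  have nn4 := vx.ne
  have nn5 := wx.ne
  by_cases hsh : ∃ y, G.Adj u y ∧ G.Adj v y ∧ y ≠ w ∧ y ≠ x
  · have sh : ∀ y, G.Adj u y → G.Adj v y → y ≠ w → y ≠ x → ¬ G.Adj y w ∧ ¬ G.Adj y x := by
      intro y uy vy hw hx
      refine ⟨fun h => ?_, fun h => ?_⟩
      · exact hG.f3 hx (fun h' => hno y uy vy h.symm h'.symm) nn nn1 nn3 uy.symm vy.symm h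
          ux.symm vx.symm wx.symm
      · exact hG.f3 hw (fun h' => hno y uy vy h'.symm h.symm) nn nn2 nn4 uy.symm vy.symm h
          uw.symm vw.symm wx
    obtain ⟨y, uy, vy, hyw, hyx⟩ := hsh
    have sy1 := sh y uy vy hyw hyx
    have hyu := uy.ne
    have hyv := vy.ne
    obtain ⟨p, hp⟩ := hu.five' (a := v) (b := w) (c := x) (d := y) (by simp; grind) uv uw ux uy
    obtain ⟨q, hq⟩ := hv.five' (a := u) (b := w) (c := x) (d := y) (by simp; grind) uv.symm vw vx vy
    have mu : ∀ z, G.Adj u z ↔ z = v ∨ z = w ∨ z = x ∨ z = y ∨ z = p := by simpa using hp.2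
    have mv : ∀ z, G.Adj v z ↔ z = u ∨ z = w ∨ z = x ∨ z = y ∨ z = q := by simpa using hq.2
    have np := hp.1
    have nq := hq.1
    simp only [List.nodup_cons, List.mem_cons, List.not_mem_nil, or_false, not_or] at np nq
    have up : G.Adj u p := by simp [mu]
    have vq : G.Adj v q := by simp [mv]
    by_cases hpq : p = q
    · subst hpq
      have sp := sh p up vq (by grind) (by grind)
      have hNB := nb_of_noCut hG.noCut [u, v] [w, x, y, p] u (by simp) (by grind)
        (by intro a ha z hz; simp only [List.mem_cons, List.not_mem_nil, or_false] at ha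
            rcases ha with rfl | rfl
            · have := (mu z).1 hz; simp; grind
            · have := (mv z).1 hz; simp; grind) (by simp; omega)
      have hc := hNB.col4 (by simp; grind) true false true false
      simp only [true_and, reduceCtorEq, false_and, false_or, or_false] at hc
      grind
    · have npv : ¬ G.Adj p v := fun h => by have := (mv p).1 h.symm; have := up.ne; grind
      have nqu : ¬ G.Adj q u := fun h => by have := (mu q).1 h.symm; have := vq.ne; grind
      have op : ∀ y z, G.Adj v y → G.Adj v z → y ≠ u → z ≠ u → G.Adj p y → G.Adj p z → y = z :=
        fun y z => hG.outer (by grind) npv up.symm uv.symm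
      have oq : ∀ y z, G.Adj u y → G.Adj u z → y ≠ v → z ≠ v → G.Adj q y → G.Adj q z → y = z :=
        fun y z => hG.outer (by grind) nqu vq.symm uv
      have hNB := nb_of_noCut hG.noCut [u, v] [p, q, y, w, x] u (by simp)
        (by have := up.ne; simp; grind)
        (by intro a ha z hz; simp only [List.mem_cons, List.not_mem_nil, or_false] at ha
            rcases ha with rfl | rfl
            · have := (mu z).1 hz; simp; grind
            · have := (mv z).1 hz; simp; grind) (by simp; omega)
      refine not_NB_two (((hNB.peel ?_).peel ?_).peel ?_)
      · intro a ha b hb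
        simp only [List.mem_cons, List.not_mem_nil, or_false] at ha hb
        exact op a b (by grind) (by grind) (by have := vq.ne; grind) (by have := vq.ne; grind)
      · intro a ha b hb
        simp only [List.mem_cons, List.not_mem_nil, or_false] at ha hb
        exact oq a b (by grind) (by grind) (by grind) (by grind)
      · intro a ha b hb
        simp only [List.mem_cons, List.not_mem_nil, or_false] at ha hb
        grind
  · push Not at hsh
    obtain ⟨p₁, p₂, hp⟩ := hu.five (a := v) (b := w) (c := x) (by simp; grind) uv uw ux
    obtain ⟨q₁, q₂, hq⟩ := hv.five (a := u) (b := w) (c := x) (by simp; grind) uv.symm vw vx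
    refine hG.l5_aux h9 hp hq wx ?_
    have mu : ∀ z, G.Adj u z ↔ z = v ∨ z = w ∨ z = x ∨ z = p₁ ∨ z = p₂ := by simpa using hp.2
    have mv : ∀ z, G.Adj v z ↔ z = u ∨ z = w ∨ z = x ∨ z = q₁ ∨ z = q₂ := by simpa using hq.2
    have np := hp.1
    have nq := hq.1
    simp only [List.nodup_cons, List.mem_cons, List.not_mem_nil, or_false, not_or] at np nq
    have up₁ : G.Adj u p₁ := by simp [mu]
    have up₂ : G.Adj u p₂ := by simp [mu]
    have vq₁ : G.Adj v q₁ := by simp [mv]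
    have vq₂ : G.Adj v q₂ := by simp [mv]
    have s1 := hsh p₁ up₁
    have s2 := hsh p₂ up₂
    have := up₁.ne; have := up₂.ne; have := vq₁.ne; have := vq₂.ne
    simp only [List.nodup_cons, List.mem_cons, List.not_mem_nil, or_false, not_or]
    grind

end adjacentFives

/-! ### Cliques on five vertices -/

section cliqueFives

variable {V : Type u} [Finite V] {G : SimpleGraph V}

/-- The case of `l5'` in which exactly two outer neighbours coincide. -/
lemma Critical.l5'_two (hG : Critical G) (h9 : 9 ≤ Nat.card V) {u v w x y p q : V}
    (hu : Nb G u [v, w, x, y, p]) (hv : Nb G v [u, w, x, y, p]) (hw : Nb G w [u, v, x, y, q]) (hpq : p ≠ q) : False := by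
  have sy : ∀ x y, G.Adj x y → G.Adj y x := fun _ _ h => h.symm
  have mu : ∀ z, G.Adj u z ↔ z = v ∨ z = w ∨ z = x ∨ z = y ∨ z = p := by simpa using hu.2
  have mv : ∀ z, G.Adj v z ↔ z = u ∨ z = w ∨ z = x ∨ z = y ∨ z = p := by simpa using hv.2
  have mw : ∀ z, G.Adj w z ↔ z = u ∨ z = v ∨ z = x ∨ z = y ∨ z = q := by simpa using hw.2
  have nu := hu.1
  have nv := hv.1
  have nw := hw.1
  simp only [List.nodup_cons, List.mem_cons, List.not_mem_nil, or_false, not_or] at nu nv nw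
  have up : G.Adj u p := by simp [mu]
  have vp : G.Adj v p := by simp [mv]
  have wq : G.Adj w q := by simp [mw]
  have ux : G.Adj u x := by simp [mu]
  have vx : G.Adj v x := by simp [mv]
  have wx : G.Adj w x := by simp [mw]
  have uy : G.Adj u y := by simp [mu]
  have vy : G.Adj v y := by simp [mv]
  have wy : G.Adj w y := by simp [mw]
  have uv : G.Adj u v := by simp [mu]
  have uw : G.Adj u w := by simp [mu]
  have vw : G.Adj v w := by simp [mv]
  have npw : ¬ G.Adj p w := fun h => by have := (mw p).1 h.symm; grind
  have wq' := wq.ne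
  have nqu : ¬ G.Adj q u := fun h => by have := (mu q).1 h.symm; grind
  have px : ¬ G.Adj p x := fun h =>
    hG.f3 (by grind) npw uv.ne ux.ne vx.ne up.symm vp.symm h uw.symm vw.symm wx
  have py : ¬ G.Adj p y := fun h =>
    hG.f3 (by grind) npw uv.ne uy.ne vy.ne up.symm vp.symm h uw.symm vw.symm wy
  have hNB := nb_of_noCut hG.noCut [u, v, w] [p, q, x, y] u (by simp)
    (by have := up.ne; simp; grind)
    (by intro a ha z hz; simp only [List.mem_cons, List.not_mem_nil, or_false] at ha
        rcases ha with rfl | rfl | rfl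
        · have := (mu z).1 hz; simp; grind
        · have := (mv z).1 hz; simp; grind
        · have := (mw z).1 hz; simp; grind) (by simp; omega)
  refine not_NB_two ((hNB.peel ?_).peel ?_)
  · intro a ha b hb
    simp only [List.mem_cons, List.not_mem_nil, or_false] at ha hb
    grind
  · intro a ha b hb
    simp only [List.mem_cons, List.not_mem_nil, or_false] at ha hb
    exact hG.outer (by grind) nqu wq.symm uw (by grind) (by grind) (by grind) (by grind)

set_option maxHeartbeats 1000000 in
/-- A `K₅` contains at most two vertices of degree five. -/
lemma Critical.l5' (hG : Critical G) (h9 : 9 ≤ Nat.card V) {u v w x y : V} (hu : Dg G u 5)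
    (hv : Dg G v 5) (hw : Dg G w 5) (uv : G.Adj u v) (uw : G.Adj u w) (ux : G.Adj u x)
    (uy : G.Adj u y) (vw : G.Adj v w) (vx : G.Adj v x) (vy : G.Adj v y) (wx : G.Adj w x)
    (wy : G.Adj w y) (xy : G.Adj x y) : False := by
  have sy : ∀ x y, G.Adj x y → G.Adj y x := fun _ _ h => h.symm
  have n1 := uv.ne
  have n2 := uw.ne
  have n3 := ux.ne
  have n4 := uy.ne
  have n5 := vw.ne
  have n6 := vx.ne
  have n7 := vy.ne
  have n8 := wx.ne
  have n9 := wy.ne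
  have n10 := xy.ne
  obtain ⟨u₁, hu⟩ := hu.five' (a := v) (b := w) (c := x) (d := y) (by simp; grind) uv uw ux uy
  obtain ⟨v₁, hv⟩ := hv.five' (a := u) (b := w) (c := x) (d := y) (by simp; grind) uv.symm vw vx vy
  obtain ⟨w₁, hw⟩ := hw.five' (a := u) (b := v) (c := x) (d := y) (by simp; grind)
    uw.symm vw.symm wx wy
  have mu : ∀ z, G.Adj u z ↔ z = v ∨ z = w ∨ z = x ∨ z = y ∨ z = u₁ := by simpa using hu.2
  have mv : ∀ z, G.Adj v z ↔ z = u ∨ z = w ∨ z = x ∨ z = y ∨ z = v₁ := by simpa using hv.2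
  have mw : ∀ z, G.Adj w z ↔ z = u ∨ z = v ∨ z = x ∨ z = y ∨ z = w₁ := by simpa using hw.2
  have nu := hu.1
  have nv := hv.1
  have nw := hw.1
  simp only [List.nodup_cons, List.mem_cons, List.not_mem_nil, or_false, not_or] at nu nv nw
  have uu₁ : G.Adj u u₁ := by simp [mu]
  have vv₁ : G.Adj v v₁ := by simp [mv]
  have ww₁ : G.Adj w w₁ := by simp [mw]
  have m1 := uu₁.ne
  have m2 := vv₁.ne
  have m3 := ww₁.ne
  by_cases e1 : u₁ = v₁
  · subst e1
    by_cases e2 : u₁ = w₁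
    · subst e2
      have hx : G.Adj u₁ x := by
        by_contra h
        exact hG.f3 (by grind) h n1 n2 n5 uu₁.symm vv₁.symm ww₁.symm ux.symm vx.symm wx.symm
      have hy : G.Adj u₁ y := by
        by_contra h
        exact hG.f3 (by grind) h n1 n2 n5 uu₁.symm vv₁.symm ww₁.symm uy.symm vy.symm wy.symm
      refine hG.r1 n5 n6 n8 uv uw ux ?_
      intro a b ha hb
      have := (mu a).1 ha
      have := (mu b).1 hb
      grind
    · exact hG.l5'_two h9 hu hv hw e2
  · by_cases e2 : u₁ = w₁
    · subst e2
      exact hG.l5'_two h9 (hu.re : Nb G u [w, v, x, y, u₁]) hw hv e1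
    · by_cases e3 : v₁ = w₁
      · subst e3
        exact hG.l5'_two h9 (hv.re : Nb G v [w, u, x, y, v₁]) (hw.re : Nb G w [v, u, x, y, v₁])
          hu (Ne.symm e1)
      · have a1 : ¬ G.Adj u₁ v := fun h => by have := (mv u₁).1 h.symm; grind
        have a2 : ¬ G.Adj u₁ w := fun h => by have := (mw u₁).1 h.symm; grind
        have a3 : ¬ G.Adj v₁ u := fun h => by have := (mu v₁).1 h.symm; grind
        have a4 : ¬ G.Adj v₁ w := fun h => by have := (mw v₁).1 h.symm; grind
        have a5 : ¬ G.Adj w₁ u := fun h => by have := (mu w₁).1 h.symm; grind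
        have a6 : ¬ G.Adj w₁ v := fun h => by have := (mv w₁).1 h.symm; grind
        -- an outer neighbour adjacent to `x` or `y` is adjacent to no other vertex among `x`, `y`
        -- and the outer neighbours
        have b1 : ∀ a b, (a = x ∨ a = y) → (b = x ∨ b = y ∨ b = v₁ ∨ b = w₁) → G.Adj u₁ a →
            G.Adj u₁ b → a = b := by
          intro a b ha hb h1 h2
          rcases (by tauto : (b = x ∨ b = y ∨ b = v₁) ∨ b = w₁) with hb | hb
          · exact hG.outer (by grind) a1 uu₁.symm uv.symm (by grind) (by grind) (by grind)
              (by grind) h1 h2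
          · exact hG.outer (by grind) a2 uu₁.symm uw.symm (by grind) (by grind) (by grind)
              (by grind) h1 h2
        have b2 : ∀ a b, (a = x ∨ a = y) → (b = x ∨ b = y ∨ b = u₁ ∨ b = w₁) → G.Adj v₁ a →
            G.Adj v₁ b → a = b := by
          intro a b ha hb h1 h2
          rcases (by tauto : (b = x ∨ b = y ∨ b = u₁) ∨ b = w₁) with hb | hb
          · exact hG.outer (by grind) a3 vv₁.symm uv (by grind) (by grind) (by grind)
              (by grind) h1 h2
          · exact hG.outer (by grind) a4 vv₁.symm vw.symm (by grind) (by grind) (by grind)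
              (by grind) h1 h2
        have b3 : ∀ a b, (a = x ∨ a = y) → (b = x ∨ b = y ∨ b = u₁ ∨ b = v₁) → G.Adj w₁ a →
            G.Adj w₁ b → a = b := by
          intro a b ha hb h1 h2
          rcases (by tauto : (b = x ∨ b = y ∨ b = u₁) ∨ b = v₁) with hb | hb
          · exact hG.outer (by grind) a5 ww₁.symm uw (by grind) (by grind) (by grind)
              (by grind) h1 h2
          · exact hG.outer (by grind) a6 ww₁.symm vw (by grind) (by grind) (by grind)
              (by grind) h1 h2
        have hNB := nb_of_noCut hG.noCut [u, v, w] [x, y, u₁, v₁, w₁] u (by simp)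
          (by simp; grind)
          (by intro a ha z hz; simp only [List.mem_cons, List.not_mem_nil, or_false] at ha
              rcases ha with rfl | rfl | rfl
              · have := (mu z).1 hz; simp; grind
              · have := (mv z).1 hz; simp; grind
              · have := (mw z).1 hz; simp; grind) (by simp; omega)
        have hc := hNB.col5 (by simp; grind)
        have c1 := b1 x y (by simp) (by simp)
        have c2 := b1 x v₁ (by simp) (by simp)
        have c3 := b1 x w₁ (by simp) (by simp)
        have c4 := b1 y v₁ (by simp) (by simp)
        have c5 := b1 y w₁ (by simp) (by simp)
        have d1 := b2 x y (by simp) (by simp)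
        have d2 := b2 x u₁ (by simp) (by simp)
        have d3 := b2 x w₁ (by simp) (by simp)
        have d4 := b2 y u₁ (by simp) (by simp)
        have d5 := b2 y w₁ (by simp) (by simp)
        have f1 := b3 x y (by simp) (by simp)
        have f2 := b3 x u₁ (by simp) (by simp)
        have f3 := b3 x v₁ (by simp) (by simp)
        have f4 := b3 y u₁ (by simp) (by simp)
        have f5 := b3 y v₁ (by simp) (by simp)
        have k1 := hc true false true true true
        have k2 := hc true false true true false
        have k3 := hc true false true false true
        have k4 := hc true false true false false
        have k5 := hc true false false true true
        have k6 := hc true false false true false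
        have k7 := hc true false false false true
        have k8 := hc true false false false false
        simp only [true_and, reduceCtorEq, false_and, false_or, or_false] at k1 k2 k3 k4 k5 k6 k7 k8
        have hnd : [u, v, w, x, y, u₁, v₁, w₁].Nodup := by
          simp only [List.nodup_cons, List.mem_cons, List.not_mem_nil, or_false, not_or]
          grind
        have key : G.Adj u₁ v₁ ∧ G.Adj u₁ w₁ ∧ G.Adj v₁ w₁ := by
          clear hc hNB b1 b2 b3 mu mv mw hnd hG
          simp only [G.adj_comm u₁ x, G.adj_comm v₁ x, G.adj_comm w₁ x, G.adj_comm u₁ y,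
            G.adj_comm v₁ y, G.adj_comm w₁ y, G.adj_comm v₁ u₁, G.adj_comm w₁ u₁,
            G.adj_comm w₁ v₁] at *
          clear sy
          grind
        exact hG.r5 h9 hu hv hw hnd xy key.1 key.2.1 key.2.2
          (fun h => by have := c2 h.symm key.1; grind)
          (fun h => by have := d4 h.symm key.1.symm; grind)

end cliqueFives

/-! ### Vertices of degree five in no `K₄` -/

section wheels

variable {V : Type u} [Finite V] {G : SimpleGraph V}

/-- The vertex `h` lies in no `K₄`. -/
def NoK4 {V : Type u} (G : SimpleGraph V) (h : V) : Prop :=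
  ∀ a b c, G.Adj h a → G.Adj h b → G.Adj h c → G.Adj a b → G.Adj a c → G.Adj b c → False

/-- The neighbours of `h` are `r₁, …, r₅`, and they form a closed walk in this order. -/
structure Wheel {V : Type u} (G : SimpleGraph V) (h r₁ r₂ r₃ r₄ r₅ : V) : Prop where
  nb : Nb G h [r₁, r₂, r₃, r₄, r₅]
  e12 : G.Adj r₁ r₂
  e23 : G.Adj r₂ r₃
  e34 : G.Adj r₃ r₄
  e45 : G.Adj r₄ r₅
  e51 : G.Adj r₅ r₁

lemma Wheel.rot {h r₁ r₂ r₃ r₄ r₅ : V} (w : Wheel G h r₁ r₂ r₃ r₄ r₅) :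
    Wheel G h r₂ r₃ r₄ r₅ r₁ :=
  ⟨w.nb.re, w.e23, w.e34, w.e45, w.e51, w.e12⟩

/-- If `h` has degree five and lies in no `K₄`, then a path `r₂ r₁ r₅` in its neighbourhood extends
to a spanning five-cycle of the neighbourhood. -/
lemma Critical.wheel_of (hG : Critical G) (h9 : 9 ≤ Nat.card V) {h r₁ r₂ r₅ : V} (hh : Dg G h 5)
    (hT : NoK4 G h) (h1 : G.Adj h r₁) (h2 : G.Adj h r₂) (h5 : G.Adj h r₅) (e12 : G.Adj r₁ r₂)
    (e15 : G.Adj r₁ r₅) (h25 : r₂ ≠ r₅) : ∃ r₃ r₄, Wheel G h r₁ r₂ r₃ r₄ r₅ := by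
  have sy : ∀ x y, G.Adj x y → G.Adj y x := fun _ _ h => h.symm
  obtain ⟨d, e, hN⟩ := hh.five (a := r₁) (b := r₂) (c := r₅)
    (by have := e12.ne; have := e15.ne; simp; grind) h1 h2 h5
  have hd : G.Adj h d := by simp [hN.2]
  have he : G.Adj h e := by simp [hN.2]
  have hNB := hG.nb_nbhd hN (by simp; omega)
  have hc := hNB.col5 hN.1
  have k1 := hc true false false true true
  have k2 := hc true false false true false
  have k3 := hc true false false false true
  have k4 := hc true false false false false
  have t1 := hT r₁ r₂ r₅ h1 h2 h5 e12 e15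
  have t2 := hT r₁ r₂ d h1 h2 hd e12
  have t3 := hT r₁ r₂ e h1 h2 he e12
  have t4 := hT r₁ r₅ d h1 h5 hd e15
  have t5 := hT r₁ r₅ e h1 h5 he e15
  have t6 := hT r₂ d e h2 hd he
  have t7 := hT r₅ d e h5 hd he
  have t8 := hT r₁ d e h1 hd he
  simp only [true_and, reduceCtorEq, false_and, false_or, or_false] at k1 k2 k3 k4
  have key : (G.Adj r₂ d ∧ G.Adj d e ∧ G.Adj e r₅) ∨ (G.Adj r₂ e ∧ G.Adj e d ∧ G.Adj d r₅) := by
    clear hc hNB hN hT hG hh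
    grind
  rcases key with ⟨k1, k2, k3⟩ | ⟨k1, k2, k3⟩
  · exact ⟨d, e, hN.re, e12, k1, k2, k3, e15.symm⟩
  · exact ⟨e, d, hN.re, e12, k1, k2, k3, e15.symm⟩

/-- The neighbourhood of a vertex of degree five that lies in no `K₄` contains a spanning
five-cycle. -/
lemma Critical.wheel (hG : Critical G) (h9 : 9 ≤ Nat.card V) {h : V} (hh : Dg G h 5)
    (hT : NoK4 G h) : ∃ r₁ r₂ r₃ r₄ r₅, Wheel G h r₁ r₂ r₃ r₄ r₅ := by
  by_contra hno
  have hu : ∀ p a b, G.Adj h p → G.Adj h a → G.Adj h b → G.Adj p a → G.Adj p b → a = b := by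
    intro p a b hp ha hb pa pb
    by_contra hab
    obtain ⟨r₃, r₄, hw⟩ := hG.wheel_of h9 hh hT hp ha hb pa pb hab
    exact hno ⟨_, _, _, _, _, hw⟩
  obtain ⟨l, hl, hlen⟩ := hh
  have hNB := hG.nb_nbhd hl (by omega)
  match l, hlen with
  | [a, b, c, d, e], _ =>
    have mh : ∀ z, G.Adj h z ↔ z = a ∨ z = b ∨ z = c ∨ z = d ∨ z = e := by simpa using hl.2
    refine not_NB_two (((hNB.peel ?_).peel ?_).peel ?_) <;>
    · intro x hx y hy
      simp only [List.mem_cons, List.not_mem_nil, or_false] at hx hy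
      exact hu _ _ _ (by simp [mh]) (by grind) (by grind)

/-- No vertex of degree four lies on the rim of a wheel. -/
lemma Critical.rim4 (hG : Critical G) (h8 : 8 ≤ Nat.card V) {h r₁ r₂ r₃ r₄ r₅ : V}
    (hT : NoK4 G h) (w : Wheel G h r₁ r₂ r₃ r₄ r₅) (hr : Dg G r₁ 4) : False := by
  have sy : ∀ x y, G.Adj x y → G.Adj y x := fun _ _ h => h.symm
  have h1 : G.Adj h r₁ := by simp [w.nb.2]
  have h2 : G.Adj h r₂ := by simp [w.nb.2]
  have h5 : G.Adj h r₅ := by simp [w.nb.2]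
  have h25 : r₂ ≠ r₅ := by have := w.nb.1; grind
  have t := hT r₁ r₂ r₅ h1 h2 h5 w.e12 w.e51.symm
  obtain ⟨a, b, c, d, hN, ab, ac, bc⟩ := hG.l2 h8 hr
  have m : ∀ z, G.Adj r₁ z ↔ z = a ∨ z = b ∨ z = c ∨ z = d := by simpa using hN.2
  have m1 := (m h).1 h1.symm
  have m2 := (m r₂).1 w.e12
  have m3 := (m r₅).1 w.e51.symm
  have ra : G.Adj r₁ a := by simp [m]
  have rb : G.Adj r₁ b := by simp [m]
  have rc : G.Adj r₁ c := by simp [m]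
  rcases m1 with rfl | rfl | rfl | rfl
  · exact hT r₁ b c h1 ab ac rb rc bc
  · exact hT r₁ a c h1 ab.symm bc ra rc ac
  · exact hT r₁ a b h1 ac.symm bc.symm ra rb ab
  · have := h2.ne
    have := h5.ne
    grind

/-- No three consecutive vertices on the rim of a wheel have degree five. -/
lemma Critical.rim555 (hG : Critical G) (h9 : 9 ≤ Nat.card V) {h r₁ r₂ r₃ r₄ r₅ : V}
    (hT : NoK4 G h) (w : Wheel G h r₁ r₂ r₃ r₄ r₅) (d1 : Dg G r₁ 5) (d2 : Dg G r₂ 5)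
    (d5 : Dg G r₅ 5) : False := by
  have sy : ∀ x y, G.Adj x y → G.Adj y x := fun _ _ h => h.symm
  have h1 : G.Adj h r₁ := by simp [w.nb.2]
  have h2 : G.Adj h r₂ := by simp [w.nb.2]
  have h3 : G.Adj h r₃ := by simp [w.nb.2]
  have h4 : G.Adj h r₄ := by simp [w.nb.2]
  have h5 : G.Adj h r₅ := by simp [w.nb.2]
  have mh : ∀ z, G.Adj h z ↔ z = r₁ ∨ z = r₂ ∨ z = r₃ ∨ z = r₄ ∨ z = r₅ := by simpa using w.nb.2
  have nd := w.nb.1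
  simp only [List.nodup_cons, List.mem_cons, List.not_mem_nil, or_false, not_or] at nd
  have e12 := w.e12
  have e23 := w.e23
  have e34 := w.e34
  have e45 := w.e45
  have e51 := w.e51
  have t := hT r₁ r₂ r₅ h1 h2 h5 w.e12 w.e51.symm
  have nh1 := h1.ne
  have nh2 := h2.ne
  have nh5 := h5.ne
  by_cases hT1 : NoK4 G r₁
  · obtain ⟨a, b, w'⟩ := hG.wheel_of h9 d1 hT1 h1.symm e12 e51.symm h2 h5 (by grind)
    have r1a : G.Adj r₁ a := by simp [w'.nb.2]
    have r1b : G.Adj r₁ b := by simp [w'.nb.2]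
    have m1 : ∀ z, G.Adj r₁ z ↔ z = h ∨ z = r₂ ∨ z = a ∨ z = b ∨ z = r₅ := by simpa using w'.nb.2
    have nd1 := w'.nb.1
    simp only [List.nodup_cons, List.mem_cons, List.not_mem_nil, or_false, not_or] at nd1
    have ra := w'.e23
    have ab := w'.e34
    have br := w'.e45
    have ha : ¬ G.Adj a h := fun k => hT1 h r₂ a h1.symm e12 r1a h2 k.symm ra
    have hb : ¬ G.Adj b h := fun k => hT1 h b r₅ h1.symm r1b e51.symm k.symm h5 br
    have n13 : ¬ G.Adj r₁ r₃ := fun k => hT r₁ r₂ r₃ h1 h2 h3 e12 k e23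
    have n14 : ¬ G.Adj r₁ r₄ := fun k => hT r₁ r₄ r₅ h1 h4 h5 k e51.symm e45
    have n24 : ¬ G.Adj r₂ r₄ := fun k => hT r₂ r₃ r₄ h2 h3 h4 e23 k e34
    have n35 : ¬ G.Adj r₃ r₅ := fun k => hT r₃ r₄ r₅ h3 h4 h5 e34 k e45
    have n2b : ¬ G.Adj r₂ b := fun k => hT1 r₂ a b e12 r1a r1b ra k ab
    have n5a : ¬ G.Adj r₅ a := fun k => hT1 a b r₅ r1a r1b e51.symm ab k.symm br
    have n4b : ¬ G.Adj r₄ b := fun k => hG.f3 (a := r₁) (b := r₅) (c := r₄) (by grind) hb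
      (by grind) (by grind) (by grind) r1b.symm br k.symm h1 h5 h4
    have n3a : ¬ G.Adj r₃ a := fun k => hG.f3 (a := r₁) (b := r₂) (c := r₃) (by grind) ha
      (by grind) (by grind) (by grind) r1a.symm ra.symm k.symm h1 h2 h3
    have n1a := r1a.ne
    have n1b := r1b.ne
    have hNB := nb_of_noCut hG.noCut [h, r₁] [r₂, r₃, r₄, r₅, a, b] h (by simp)
      (by have := h3.ne; have := h4.ne; simp; grind)
      (by intro p hp z hz; simp only [List.mem_cons, List.not_mem_nil, or_false] at hp
          rcases hp with rfl | rfl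
          · have := (mh z).1 hz; simp; grind
          · have := (m1 z).1 hz; simp; grind) (by simp; omega)
    have hc := hNB.col6 (by simp; grind) true false true false false true
    simp only [true_and, reduceCtorEq, false_and, false_or, or_false] at hc
    grind
  · have key : ∀ r r' y z, r = r₂ ∧ r' = r₅ ∨ r = r₅ ∧ r' = r₂ → Nb G r₁ [h, r₂, r₅, y, z] →
        G.Adj r y → G.Adj r z → G.Adj y z → False := by
      intro r r' y z hr hN ry rz yz
      have m1 : ∀ k, G.Adj r₁ k ↔ k = h ∨ k = r₂ ∨ k = r₅ ∨ k = y ∨ k = z := by simpa using hN.2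
      have r1y : G.Adj r₁ y := by simp [m1]
      have r1z : G.Adj r₁ z := by simp [m1]
      have r1r : G.Adj r₁ r := by rcases hr with ⟨rfl, -⟩ | ⟨rfl, -⟩ <;> simp [m1]
      have hr' : G.Adj h r := by rcases hr with ⟨rfl, -⟩ | ⟨rfl, -⟩ <;> assumption
      have dr : Dg G r 5 := by rcases hr with ⟨rfl, -⟩ | ⟨rfl, -⟩ <;> assumption
      obtain ⟨k, k1, k2, k3, k4⟩ := hG.l5 h9 d1 dr r1r r1y r1z ry rz yz
      have := (m1 k).1 k1
      have hy := hT r₁ r k h1 hr'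
      have hy' := hT r₁ r y h1 hr'
      have i1 := k2.ne
      have i2 := k3.ne
      have i3 := k4.ne
      grind
    obtain ⟨y, z, hN⟩ := d1.five (a := h) (b := r₂) (c := r₅) (by simp; grind) h1.symm e12 e51.symm
    have m1 : ∀ k, G.Adj r₁ k ↔ k = h ∨ k = r₂ ∨ k = r₅ ∨ k = y ∨ k = z := by simpa using hN.2
    have k1 := key r₂ r₅ y z (by simp) hN
    have k2 := key r₅ r₂ y z (by simp) hN
    apply hT1
    intro a b c ha hb hc ab ac bc
    have na := ab.ne
    have nb := ac.ne
    have nc := bc.ne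
    have q1 : a ≠ h := by rintro rfl; exact hT r₁ b c h1 ab ac hb hc bc
    have q2 : b ≠ h := by rintro rfl; exact hT r₁ a c h1 ab.symm bc ha hc ac
    have q3 : c ≠ h := by rintro rfl; exact hT r₁ a b h1 ac.symm bc.symm ha hb ab
    have ma := (m1 a).1 ha
    have mb := (m1 b).1 hb
    have mc := (m1 c).1 hc
    clear key hT hT1 hG m1 mh hN
    grind

end wheels

/-! ### Discharging -/

section discharging

variable {V : Type u} [Fintype V] {G : SimpleGraph V} [DecidableRel G.Adj]

lemma dg_iff {v : V} {k : ℕ} : Dg G v k ↔ G.degree v = k := by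
  classical
  have hN : Nb G v (G.neighborFinset v).toList := ⟨Finset.nodup_toList _, by simp⟩
  constructor
  · rintro ⟨l, hl, rfl⟩
    have : G.neighborFinset v = l.toFinset := by ext y; simp [hl.2]
    rw [← G.card_neighborFinset_eq_degree, this, List.toFinset_card_of_nodup hl.1]
  · rintro rfl
    exact ⟨_, hN, by simp⟩

lemma Critical.four_le_degree (hG : Critical G) (v : V) : 4 ≤ G.degree v := by
  obtain ⟨l, hl, hlen⟩ := (dg_iff (G := G) (v := v)).2 rfl
  rw [← hlen]
  exact hG.four_le hl

lemma card_edges_eq : ∑ v, G.degree v = 2 * Nat.card G.edgeSet := by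
  classical
  rw [G.sum_degrees_eq_twice_card_edges, Nat.card_eq_fintype_card, G.edgeFinset_card]

/-- A critical graph has at least nine vertices: with eight it would be regular of degree four. -/
lemma Critical.nine_le (hG : Critical G) : 9 ≤ Nat.card V := by
  classical
  have h1 : ∑ v, G.degree v = 2 * Nat.card G.edgeSet := card_edges_eq
  have h2 : ∑ _v : V, 4 ≤ ∑ v, G.degree v := Finset.sum_le_sum fun v _ => hG.four_le_degree v
  have h3 := hG.few
  have h4 : ∑ _v : V, 4 = Nat.card V * 4 := by simp
  by_contra hlt
  have h8 : Nat.card V = 8 := by omega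
  have h5 : ∑ _v : V, 4 = ∑ v, G.degree v := by omega
  have h6 := (Finset.sum_eq_sum_iff_of_le fun v _ => hG.four_le_degree v).1 h5
  have hall : ∀ v, Dg G v 4 := fun v => dg_iff.2 (h6 v (Finset.mem_univ v)).symm
  have hne : Nonempty V := (Nat.card_pos_iff.1 (by omega)).1
  obtain ⟨v⟩ := hne
  obtain ⟨a, b, c, d, hN, ab, ac, bc⟩ := hG.l2 (by omega) (hall v)
  exact hG.l3 (by omega) (hall v) (hall a) (by simp [hN.2]) (by simp [hN.2]) (by simp [hN.2])
    ab ac bc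

/-- `x` and `y` are adjacent and lie in a common `K₄`. -/
def InK4 {V : Type u} (G : SimpleGraph V) (x y : V) : Prop :=
  ∃ b c, G.Adj x y ∧ G.Adj x b ∧ G.Adj x c ∧ G.Adj y b ∧ G.Adj y c ∧ G.Adj b c

open Classical in
/-- The charge sent from `x` to `y`. Only vertices of degree at least six send charge: twelve to
each neighbour of degree four in a common `K₄`, and, to each neighbour of degree five, four or two
according to whether or not there are at least two such neighbours. -/
noncomputable def wt {V : Type u} [Fintype V] (G : SimpleGraph V) [DecidableRel G.Adj] (x y : V) :
    ℤ :=
  if 6 ≤ G.degree x ∧ G.Adj x y then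
    if G.degree y = 4 then (if InK4 G x y then 12 else 0)
    else if G.degree y = 5 then
      (if ∃ z, z ≠ y ∧ G.Adj x z ∧ G.degree z = 5 then 4 else 2)
    else 0
  else 0

lemma wt_nonneg (x y : V) : 0 ≤ wt G x y := by
  unfold wt
  split_ifs <;> norm_num

lemma wt_four {x y : V} (hx : 6 ≤ G.degree x) (hy : G.degree y = 4) (h : InK4 G x y) :
    wt G x y = 12 := by
  have : G.Adj x y := by obtain ⟨b, c, h, -⟩ := h; exact h
  simp [wt, hx, hy, h, this]

lemma wt_five {x y : V} (hx : 6 ≤ G.degree x) (hy : G.degree y = 5) (h : G.Adj x y) :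
    2 ≤ wt G x y := by
  simp only [wt, hx, hy, h]
  split_ifs <;> simp_all

lemma wt_five' {x y z : V} (hx : 6 ≤ G.degree x) (hy : G.degree y = 5) (h : G.Adj x y)
    (hz : G.degree z = 5) (hzy : z ≠ y) (hxz : G.Adj x z) : wt G x y = 4 := by
  have : ∃ z, z ≠ y ∧ G.Adj x z ∧ G.degree z = 5 := ⟨z, hzy, hxz, hz⟩
  simp only [wt, hx, hy, h, this]
  simp

lemma sum_three (v : V) {a b c : V} (hab : a ≠ b) (hac : a ≠ c) (hbc : b ≠ c) :
    wt G a v + wt G b v + wt G c v ≤ ∑ y, wt G y v := by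
  classical
  have := Finset.sum_le_sum_of_subset_of_nonneg (f := fun y => wt G y v)
    (Finset.subset_univ ({a, b, c} : Finset V)) (fun y _ _ => wt_nonneg y v)
  rw [Finset.sum_insert (by simp [hab, hac]), Finset.sum_insert (by simp [hbc]),
    Finset.sum_singleton] at this
  linarith

/-- Every other vertex of a `K₄` through a vertex of degree four has degree at least six. -/
lemma Critical.four_nbrs (hG : Critical G) {v a b c : V} (hv : G.degree v = 4) (va : G.Adj v a)
    (vb : G.Adj v b) (vc : G.Adj v c) (ab : G.Adj a b) (ac : G.Adj a c) (bc : G.Adj b c) :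
    6 ≤ G.degree a := by
  have h9 := hG.nine_le
  have h1 := hG.four_le_degree a
  have h2 : G.degree a ≠ 4 := fun h =>
    hG.l3 (by omega) (dg_iff.2 hv) (dg_iff.2 h) va vb vc ab ac bc
  have h3 : G.degree a ≠ 5 := fun h => hG.l4 h9 (dg_iff.2 hv) (dg_iff.2 h) va vb vc ab ac bc
  omega

/-- A vertex of degree four receives twelve from each of three vertices of degree at least six that
form a `K₄` with it. -/
lemma Critical.recv_four (hG : Critical G) {v : V} (hv : G.degree v = 4) :
    36 ≤ ∑ y, wt G y v := by
  have h9 := hG.nine_le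
  obtain ⟨a, b, c, d, hN, ab, ac, bc⟩ := hG.l2 (by omega) (dg_iff.2 hv)
  have va : G.Adj v a := by simp [hN.2]
  have vb : G.Adj v b := by simp [hN.2]
  have vc : G.Adj v c := by simp [hN.2]
  have := sum_three (G := G) v ab.ne ac.ne bc.ne
  rw [wt_four (hG.four_nbrs hv va vb vc ab ac bc) hv ⟨b, c, va.symm, ab, ac, vb, vc, bc⟩,
    wt_four (hG.four_nbrs hv vb va vc ab.symm bc ac) hv ⟨a, c, vb.symm, ab.symm, bc, va, vc, ac⟩,
    wt_four (hG.four_nbrs hv vc va vb ac.symm bc.symm ab) hv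
      ⟨a, b, vc.symm, ac.symm, bc.symm, va, vb, ab⟩] at this
  linarith

/-- A vertex of degree five that lies in a `K₄` receives at least two from each of three vertices of
degree at least six. Otherwise the vertices of degree at least six on the rim of its wheel send
enough, since each of them sends four if a neighbour on the rim has degree five. -/
lemma Critical.recv_five (hG : Critical G) {v : V} (hv : G.degree v = 5) :
    5 ≤ ∑ y, wt G y v := by
  classical
  have h9 := hG.nine_le
  have hv' : Dg G v 5 := dg_iff.2 hv
  have three : ∀ a b c, G.Adj v a → G.Adj v b → G.Adj v c → G.Adj a b → G.Adj a c → G.Adj b c →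
      6 ≤ G.degree a → 6 ≤ G.degree b → 6 ≤ G.degree c → 5 ≤ ∑ y, wt G y v := by
    intro a b c va vb vc ab ac bc ha hb hc
    have := sum_three (G := G) v ab.ne ac.ne bc.ne
    have := wt_five ha hv va.symm
    have := wt_five hb hv vb.symm
    have := wt_five hc hv vc.symm
    linarith
  by_cases hT : NoK4 G v
  · obtain ⟨r₁, r₂, r₃, r₄, r₅, w⟩ := hG.wheel h9 hv' hT
    have rim : ∀ r₁ r₂ r₃ r₄ r₅, Wheel G v r₁ r₂ r₃ r₄ r₅ → 5 ≤ G.degree r₁ ∧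
        ¬ (G.degree r₅ = 5 ∧ G.degree r₁ = 5 ∧ G.degree r₂ = 5) ∧ 0 ≤ wt G r₁ v ∧
        (6 ≤ G.degree r₁ → 2 ≤ wt G r₁ v) ∧
        (6 ≤ G.degree r₁ → G.degree r₂ = 5 ∨ G.degree r₅ = 5 → wt G r₁ v = 4) := by
      intro r₁ r₂ r₃ r₄ r₅ w
      have h1 : G.Adj v r₁ := by simp [w.nb.2]
      have h2 : G.Adj v r₂ := by simp [w.nb.2]
      have h5 : G.Adj v r₅ := by simp [w.nb.2]
      refine ⟨?_, ?_, wt_nonneg _ _, fun h => wt_five h hv h1.symm, fun h h' => ?_⟩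
      · have := hG.four_le_degree r₁
        have : G.degree r₁ ≠ 4 := fun h => hG.rim4 (by omega) hT w (dg_iff.2 h)
        omega
      · rintro ⟨d5, d1, d2⟩
        exact hG.rim555 h9 hT w (dg_iff.2 d1) (dg_iff.2 d2) (dg_iff.2 d5)
      · rcases h' with h' | h'
        · exact wt_five' h hv h1.symm h' h2.ne' w.e12
        · exact wt_five' h hv h1.symm h' h5.ne' w.e51.symm
    have k1 := rim _ _ _ _ _ w
    have k2 := rim _ _ _ _ _ w.rot
    have k3 := rim _ _ _ _ _ w.rot.rot
    have k4 := rim _ _ _ _ _ w.rot.rot.rot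
    have k5 := rim _ _ _ _ _ w.rot.rot.rot.rot
    have nd := w.nb.1
    have hs := Finset.sum_le_sum_of_subset_of_nonneg (f := fun y => wt G y v)
      (Finset.subset_univ ([r₁, r₂, r₃, r₄, r₅].toFinset)) (fun y _ _ => wt_nonneg y v)
    rw [List.sum_toFinset _ nd] at hs
    simp only [List.map_cons, List.map_nil, List.sum_cons, List.sum_nil] at hs
    clear rim three
    generalize wt G r₁ v = x1 at *
    generalize wt G r₂ v = x2 at *
    generalize wt G r₃ v = x3 at *
    generalize wt G r₄ v = x4 at *
    generalize wt G r₅ v = x5 at *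
    generalize G.degree r₁ = d1 at *
    generalize G.degree r₂ = d2 at *
    generalize G.degree r₃ = d3 at *
    generalize G.degree r₄ = d4 at *
    generalize G.degree r₅ = d5 at *
    omega
  · have hT' : ∃ a b c, G.Adj v a ∧ G.Adj v b ∧ G.Adj v c ∧ G.Adj a b ∧ G.Adj a c ∧ G.Adj b c := by
      by_contra hno
      exact hT fun a b c h1 h2 h3 h4 h5 h6 => hno ⟨a, b, c, h1, h2, h3, h4, h5, h6⟩
    have five : ∀ a b c, G.Adj v a → G.Adj v b → G.Adj v c → G.Adj a b → G.Adj a c → G.Adj b c →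
        5 ≤ G.degree a := by
      intro a b c va vb vc ab ac bc
      have := hG.four_le_degree a
      have : G.degree a ≠ 4 := fun h =>
        hG.l4 h9 (dg_iff.2 h) hv' va.symm ab ac vb vc bc
      omega
    have other : ∀ a b c, G.Adj v a → G.Adj v b → G.Adj v c → G.Adj a b → G.Adj a c → G.Adj b c →
        G.degree a = 5 → 5 ≤ ∑ y, wt G y v := by
      intro a b c va vb vc ab ac bc ha
      obtain ⟨y, vy, ay, yb, yc⟩ := hG.l5 h9 hv' (dg_iff.2 ha) va vb vc ab ac bc
      have db := five b c y vb vc vy bc yb yc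
      have dc := five c b y vc vb vy bc.symm yc yb
      have dy := five y b c vy vb vc yb.symm yc.symm bc
      have nb : G.degree b ≠ 5 := fun h =>
        hG.l5' h9 hv' (dg_iff.2 ha) (dg_iff.2 h) va vb vc vy ab ac ay bc yb yc
      have nc : G.degree c ≠ 5 := fun h =>
        hG.l5' h9 hv' (dg_iff.2 ha) (dg_iff.2 h) va vc vb vy ac ab ay bc.symm yc yb
      have ny : G.degree y ≠ 5 := fun h =>
        hG.l5' h9 hv' (dg_iff.2 ha) (dg_iff.2 h) va vy vb vc ay ab ac yb.symm yc.symm bc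
      exact three b c y vb vc vy bc yb yc (by omega) (by omega) (by omega)
    obtain ⟨a, b, c, va, vb, vc, ab, ac, bc⟩ := hT'
    have da := five a b c va vb vc ab ac bc
    have db := five b a c vb va vc ab.symm bc ac
    have dc := five c a b vc va vb ac.symm bc.symm ab
    by_cases ea : G.degree a = 5
    · exact other a b c va vb vc ab ac bc ea
    by_cases eb : G.degree b = 5
    · exact other b a c vb va vc ab.symm bc ac eb
    by_cases ec : G.degree c = 5
    · exact other c a b vc va vb ac.symm bc.symm ab ec
    exact three a b c va vb vc ab ac bc (by omega) (by omega) (by omega)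

/-- The vertices of a triangle in the neighbourhood of a vertex `v` of degree four have no common
neighbour other than `v`. -/
lemma Critical.quad (hG : Critical G) {v d a b c : V} (hv : G.degree v = 4) (hvd : d ≠ v)
    (va : G.Adj v a) (vb : G.Adj v b) (vc : G.Adj v c) (ab : G.Adj a b) (ac : G.Adj a c)
    (bc : G.Adj b c) (da : G.Adj d a) (db : G.Adj d b) (dc : G.Adj d c) : False := by
  by_cases h : G.Adj d v
  · obtain ⟨e, hN⟩ := (dg_iff.2 hv : Dg G v 4).four (a := a) (b := b) (c := c)
      (by simp [ab.ne, ac.ne, bc.ne]) va vb vc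
    have := (hN.2 d).1 h.symm
    simp only [List.mem_cons, List.not_mem_nil, or_false] at this
    rcases this with rfl | rfl | rfl | rfl
    · exact da.ne rfl
    · exact db.ne rfl
    · exact dc.ne rfl
    · exact (hG.l2' hN ab ac bc).1 ⟨da, db⟩
  · exact hG.f3 hvd h ab.ne ac.ne bc.ne da db dc va vb vc

/-- The total charge sent by `x`, in terms of the sets of receiving neighbours. -/
lemma give_le {x : V} (hx : 6 ≤ G.degree x) {T F : Finset V}
    (mT : ∀ y, y ∈ T ↔ G.Adj x y ∧ G.degree y = 4 ∧ InK4 G x y)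
    (mF : ∀ y, y ∈ F ↔ G.Adj x y ∧ G.degree y = 5) (k : ℤ) (hk : ∀ y ∈ F, wt G x y ≤ k) :
    ∑ y, wt G x y ≤ 12 * T.card + k * F.card := by
  classical
  have hp : ∀ y, wt G x y ≤ (if y ∈ T then 12 else 0) + (if y ∈ F then k else 0) := by
    intro y
    by_cases h2 : y ∈ F
    · have h1 : y ∉ T := fun h1 => by
        have := (mT y).1 h1; have := (mF y).1 h2; omega
      simpa [h1, h2] using hk y h2
    · by_cases h1 : y ∈ T
      · simp only [h1, h2, if_true, if_false, add_zero]
        rw [wt_four hx ((mT y).1 h1).2.1 ((mT y).1 h1).2.2]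
      · simp only [h1, h2, if_false, add_zero]
        rw [mT] at h1
        rw [mF] at h2
        unfold wt
        split_ifs <;> simp_all
  calc ∑ y, wt G x y ≤ ∑ y, ((if y ∈ T then 12 else 0) + (if y ∈ F then k else 0)) :=
        Finset.sum_le_sum fun y _ => hp y
    _ = 12 * T.card + k * F.card := by
        rw [Finset.sum_add_distrib]
        simp [mul_comm]

/-- If `x` sends charge to at least one, two, three vertices of degree four, then it has at least
two, three, four neighbours of degree at least six, respectively. -/
lemma Critical.card_large (hG : Critical G) {x : V} {T B : Finset V}
    (mT : ∀ y, y ∈ T ↔ G.Adj x y ∧ G.degree y = 4 ∧ InK4 G x y)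
    (mB : ∀ y, y ∈ B ↔ G.Adj x y ∧ 6 ≤ G.degree y) :
    (1 ≤ T.card → 2 ≤ B.card) ∧ (2 ≤ T.card → 3 ≤ B.card) ∧ (3 ≤ T.card → 4 ≤ B.card) := by
  classical
  have nbT : ∀ v ∈ T, G.degree v = 4 ∧ G.Adj v x ∧ ∃ b c, b ∈ B ∧ c ∈ B ∧ G.Adj x b ∧ G.Adj x c ∧
      G.Adj v b ∧ G.Adj v c ∧ G.Adj b c := by
    intro v hv
    obtain ⟨-, hd, b, c, xv, xb, xc, vb, vc, bc⟩ := (mT v).1 hv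
    exact ⟨hd, xv.symm, b, c,
      (mB b).2 ⟨xb, hG.four_nbrs hd vb xv.symm vc xb.symm bc xc⟩,
      (mB c).2 ⟨xc, hG.four_nbrs hd vc xv.symm vb xc.symm bc.symm xb⟩, xb, xc, vb, vc, bc⟩
  have t1 : 1 ≤ T.card → 2 ≤ B.card := by
    intro h
    obtain ⟨v, hv⟩ := Finset.card_pos.1 h
    obtain ⟨-, -, b, c, hb, hc, -, -, -, -, bc⟩ := nbT v hv
    exact Finset.one_lt_card.2 ⟨b, hb, c, hc, bc.ne⟩
  have t2 : 2 ≤ T.card → 3 ≤ B.card := by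
    intro h
    obtain ⟨v, hv, v', hv', hne⟩ := Finset.one_lt_card.1 h
    obtain ⟨d1, vx, b, c, hb, hc, xb, xc, vb, vc, bc⟩ := nbT v hv
    obtain ⟨d1', vx', b', c', hb', hc', xb', xc', vb', vc', bc'⟩ := nbT v' hv'
    by_contra hlt
    have hBe : ({b, c} : Finset V) = B :=
      Finset.eq_of_subset_of_card_le (by simp [Finset.insert_subset_iff, hb, hc]) (by rw [Finset.card_pair bc.ne]; omega)
    have := hG.quad d1 (Ne.symm hne) vx vb vc xb xc bc vx'
    rw [← hBe] at hb' hc'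
    have := bc'.ne
    grind
  have t3 : 3 ≤ T.card → 4 ≤ B.card := by
    intro h
    obtain ⟨v, hv, v', hv', v'', hv'', n1, n2, n3⟩ := Finset.two_lt_card.1 h
    obtain ⟨d1, vx, b, c, hb, hc, xb, xc, vb, vc, bc⟩ := nbT v hv
    obtain ⟨d1', vx', b', c', hb', hc', xb', xc', vb', vc', bc'⟩ := nbT v' hv'
    obtain ⟨d1'', vx'', b'', c'', hb'', hc'', xb'', xc'', vb'', vc'', bc''⟩ := nbT v'' hv''
    by_contra hlt
    have hB3 := t2 (by omega)
    obtain ⟨r, hr, hr'⟩ : ∃ r ∈ B, r ∉ ({b, c} : Finset V) :=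
      Finset.exists_mem_notMem_of_card_lt_card (by rw [Finset.card_pair bc.ne]; omega)
    have hBe : ({r, b, c} : Finset V) = B :=
      Finset.eq_of_subset_of_card_le (by simp [Finset.insert_subset_iff, hr, hb, hc])
        (by rw [Finset.card_insert_of_notMem hr', Finset.card_pair bc.ne]; omega)
    have xr := ((mB r).1 hr).1
    have dr := ((mB r).1 hr).2
    have rv : r ≠ v := by rintro rfl; omega
    have q1 := hG.quad d1 (Ne.symm n1) vx vb vc xb xc bc vx'
    have q2 := hG.quad d1 (Ne.symm n2) vx vb vc xb xc bc vx''
    have q3 := hG.quad d1' (Ne.symm n3) vx' vb' vc' xb' xc' bc' vx''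
    have q4 := hG.quad d1 rv vx vb vc xb xc bc xr.symm
    rw [← hBe] at hb' hc' hb'' hc''
    simp only [Finset.mem_insert, Finset.mem_singleton] at hb' hc' hb'' hc''
    have := bc'.ne
    have := bc''.ne
    have sy : ∀ x y, G.Adj x y → G.Adj y x := fun _ _ h => h.symm
    clear mT mB nbT hBe t1 t2
    grind
  exact ⟨t1, t2, t3⟩

/-- A vertex of degree at least six can afford the charge it sends. -/
lemma Critical.give (hG : Critical G) {x : V} (hx : 6 ≤ G.degree x) :
    ∑ y, wt G x y ≤ 31 * G.degree x - 160 := by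
  classical
  set N := G.neighborFinset x with hN
  set T := N.filter (fun y => G.degree y = 4 ∧ InK4 G x y) with hT
  set F := N.filter (fun y => G.degree y = 5) with hF
  set B := N.filter (fun y => 6 ≤ G.degree y) with hB
  have mT : ∀ y, y ∈ T ↔ G.Adj x y ∧ G.degree y = 4 ∧ InK4 G x y := by simp [hT, hN]
  have mF : ∀ y, y ∈ F ↔ G.Adj x y ∧ G.degree y = 5 := by simp [hF, hN]
  have mB : ∀ y, y ∈ B ↔ G.Adj x y ∧ 6 ≤ G.degree y := by simp [hB, hN]
  have hsum : T.card + F.card + B.card ≤ G.degree x := by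
    have d1 : Disjoint T F := Finset.disjoint_left.2 fun y h1 h2 => by
      have := (mT y).1 h1; have := (mF y).1 h2; omega
    have d2 : Disjoint (T ∪ F) B := Finset.disjoint_left.2 fun y h1 h2 => by
      have := (mB y).1 h2
      rcases Finset.mem_union.1 h1 with h1 | h1
      · have := (mT y).1 h1; omega
      · have := (mF y).1 h1; omega
    rw [← Finset.card_union_of_disjoint d1, ← Finset.card_union_of_disjoint d2,
      ← G.card_neighborFinset_eq_degree]
    refine Finset.card_le_card fun y hy => ?_
    simp only [Finset.mem_union, mT, mF, mB] at hy
    simp only [SimpleGraph.mem_neighborFinset]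
    tauto
  obtain ⟨t1, t2, t3⟩ := hG.card_large mT mB
  have bound := give_le hx mT mF
  by_cases hF2 : 2 ≤ F.card
  · have := bound 4 (fun y _ => by unfold wt; split_ifs <;> simp_all)
    omega
  · have := bound 2 (fun y hy => by
      have hno : ¬ ∃ z, z ≠ y ∧ G.Adj x z ∧ G.degree z = 5 := by
        rintro ⟨z, hz, h1, h2⟩
        exact hF2 (Finset.one_lt_card.2 ⟨z, (mF z).2 ⟨h1, h2⟩, y, hy, hz⟩)
      have := (mF y).1 hy
      simp [wt, hno, this, hx])
    omega

end discharging

/-- There is no critical graph: after the charges are moved every vertex has nonnegative charge. -/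
theorem not_critical {V : Type u} [Finite V] (G : SimpleGraph V) : ¬ Critical G := by
  classical
  intro hG
  have : Fintype V := Fintype.ofFinite V
  have hpt : ∀ x, 0 ≤ (31 * (G.degree x : ℤ) - 160) - ∑ y, wt G x y + ∑ y, wt G y x := by
    intro x
    have h0 : 0 ≤ ∑ y, wt G y x := Finset.sum_nonneg fun y _ => wt_nonneg y x
    have h4 := hG.four_le_degree x
    by_cases h6 : 6 ≤ G.degree x
    · have := hG.give h6
      linarith
    · have hz : ∑ y, wt G x y = 0 := Finset.sum_eq_zero fun y _ => by simp [wt, h6]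
      rcases (by omega : G.degree x = 4 ∨ G.degree x = 5) with h | h
      · have := hG.recv_four h
        rw [hz, h]; push_cast; linarith
      · have := hG.recv_five h
        rw [hz, h]; push_cast; linarith
  have hs := Finset.sum_nonneg fun x (_ : x ∈ Finset.univ) => hpt x
  rw [Finset.sum_add_distrib, Finset.sum_sub_distrib, Finset.sum_comm (f := fun x y => wt G y x),
    sub_add_cancel, Finset.sum_sub_distrib, ← Finset.mul_sum] at hs
  have h1 : ∑ v, G.degree v = 2 * Nat.card G.edgeSet := card_edges_eq
  have h2 : (∑ v, (G.degree v : ℤ)) = 2 * Nat.card G.edgeSet := by exact_mod_cast h1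
  have h3 := hG.few
  have h4 : (∑ _v : V, (160 : ℤ)) = 160 * Nat.card V := by simp [mul_comm]
  rw [h2, h4] at hs
  omega

/-- The statement in natural-number form, by strong induction on the number of vertices. -/
theorem hasBipartiteCut_of_few (n : ℕ) : ∀ (V : Type u) [Finite V] (G : SimpleGraph V),
    Nat.card V = n → 4 ≤ Nat.card V → 31 * Nat.card G.edgeSet + 134 < 80 * Nat.card V →
    HasBipartiteCut G := by
  induction n using Nat.strong_induction_on with
  | _ n ih =>
    intro V _ G hn h4 hf
    classical
    by_cases h5 : 5 ≤ Nat.card V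
    · by_contra hcut
      exact not_critical G ⟨h5, hf, hcut, fun W _ H h1 h2 h3 =>
        ih (Nat.card W) (by omega) W H rfl h1 h3⟩
    · have hc : Nat.card V = 4 := by omega
      have : Fintype V := Fintype.ofFinite V
      -- a graph on four vertices with fewer than six edges has two nonadjacent vertices
      have hex : ∃ a b, a ≠ b ∧ ¬ G.Adj a b := by
        by_contra hall
        push Not at hall
        have hd : ∀ v, G.degree v = 3 := by
          intro v
          have : G.neighborFinset v = Finset.univ.erase v := by
            ext y
            simp only [SimpleGraph.mem_neighborFinset, Finset.mem_erase, Finset.mem_univ, and_true]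
            exact ⟨fun h => h.ne', fun h => hall v y (Ne.symm h)⟩
          rw [← G.card_neighborFinset_eq_degree, this, Finset.card_erase_of_mem (Finset.mem_univ v),
            Finset.card_univ, ← Nat.card_eq_fintype_card, hc]
        have h1 : ∑ v, G.degree v = 2 * Nat.card G.edgeSet := card_edges_eq
        have h2 : ∑ v, G.degree v = Nat.card V * 3 := by simp [hd]
        omega
      obtain ⟨a, b, hab, hnab⟩ := hex
      have hcard : ((Finset.univ.erase a).erase b).card = 2 := by
        rw [Finset.card_erase_of_mem (by simp [Ne.symm hab]),
          Finset.card_erase_of_mem (Finset.mem_univ a), Finset.card_univ,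
          ← Nat.card_eq_fintype_card, hc]
      obtain ⟨c, d, hcd, hS⟩ := Finset.card_eq_two.1 hcard
      have hm : ∀ y, y ≠ a → y ≠ b → y = c ∨ y = d := by
        intro y hya hyb
        have : y ∈ (Finset.univ.erase a).erase b := by simp [hya, hyb]
        rw [hS] at this
        simpa using this
      have hcm : c ∈ (Finset.univ.erase a).erase b := by rw [hS]; simp
      have hdm : d ∈ (Finset.univ.erase a).erase b := by rw [hS]; simp
      simp only [Finset.mem_erase, Finset.mem_univ, and_true, ne_eq] at hcm hdm
      obtain ⟨s, sa, sb, sc, sd⟩ : ∃ s : V → Fin 4, s a = 0 ∧ s b = 1 ∧ s c = 2 ∧ s d = 3 := by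
        refine ⟨fun y => if y = a then 0 else if y = b then 1 else if y = c then 2 else 3,
          ?_, ?_, ?_, ?_⟩
        · simp
        · simp [Ne.symm hab]
        · simp [hcm.1, hcm.2]
        · simp [hdm.1, hdm.2, Ne.symm hcd]
      have hcov : ∀ y, y = a ∨ y = b ∨ y = c ∨ y = d := by
        intro y
        have := hm y
        tauto
      refine (hasBipartiteCut_iff G).2 ⟨s, ?_, ⟨a, sa⟩, ⟨b, sb⟩⟩
      intro y z hyz
      rcases hcov y with h | h | h | h <;> rcases hcov z with h' | h' | h' | h' <;>
        rw [h, h'] at hyz ⊢ <;> simp only [sa, sb, sc, sd] <;>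
        first | decide | exact absurd rfl hyz.ne | exact absurd hyz hnab | exact absurd hyz.symm hnab

/-- every finite simple graph with `n ≥ 4` vertices and fewer than
`(80n − 134)/31` edges has a bipartite cut. -/
theorem stmt1 {V : Type*} [Fintype V] (G : SimpleGraph V)
    (hn : 4 ≤ Nat.card V)
    (he : (Nat.card G.edgeSet : ℝ) < (80 * Nat.card V - 134) / 31) :
    HasBipartiteCut G := by
  refine hasBipartiteCut_of_few _ V G rfl hn ?_
  rw [lt_div_iff₀ (by norm_num)] at he
  have h : 31 * (Nat.card G.edgeSet : ℝ) + 134 < 80 * Nat.card V := by linarith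
  exact_mod_cast h
end

section
/- Let (M, L, R) be a separation of a finite simple graph H and let S ⊆ L ∪ M be a vertex cut of the induced subgraph H[L∪M]. Then either S is a vertex cut of H, or S ∩ M is a vertex cut of H[M]. -/
/-!
Let `A`, `B` be the two sides of the cut `S` of `H[L ∪ M]`. If both sides meet `M`, their traces on
`M` show that `S ∩ M` is a vertex cut of `H[M]`. If one side misses `M`, it lies inside `L`, hence
has no neighbour in `R`; adding `R` to the other side shows that `S` is a vertex cut of `H`
(`isVertexCut_of_side_disjoint`, applied to either side).
-/

open SimpleGraph

/-- A cut `S` of `H[L ∪ M]` one of whose sides, `A`, misses `M` is a cut of `H`, with sides `A` and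
`B ∪ R`. -/
lemma isVertexCut_of_side_disjoint {V : Type*} {H : SimpleGraph V} {M L R S : Set V}
    (hsep : IsSeparation H M L R) (hS : S ⊆ L ∪ M) {A B : Set ↥(L ∪ M)}
    (hA : A.Nonempty) (hAB : Disjoint A B) (hun : A ∪ B = (Subtype.val ⁻¹' S)ᶜ)
    (hadj : ∀ x ∈ A, ∀ y ∈ B, ¬ (H.induce (L ∪ M)).Adj x y)
    (hAM : ∀ x ∈ A, (x : V) ∉ M) : IsVertexCut H S := by
  obtain ⟨-, hR, huniv, -, hMR, hLR, hLRadj⟩ := hsep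
  rw [Set.disjoint_left] at hMR hLR hAB
  have hAL : ∀ x ∈ A, (x : V) ∈ L := fun x hx => x.2.resolve_right (hAM x hx)
  have hmem : ∀ x : ↥(L ∪ M), (x ∈ A ∨ x ∈ B) ↔ (x : V) ∉ S := fun x => Set.ext_iff.mp hun x
  refine ⟨Subtype.val '' A, Subtype.val '' B ∪ R, hA.image _, hR.inr, ?_, ?_, ?_⟩
  · rw [Set.disjoint_left]
    rintro _ ⟨x, hx, rfl⟩ (⟨y, hy, hyx⟩ | hxR)
    · exact hAB hx (Subtype.ext hyx ▸ hy)
    · exact hLR (hAL x hx) hxR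
  · ext v
    constructor
    · rintro (⟨x, hx, rfl⟩ | ⟨x, hx, rfl⟩ | hv)
      · exact (hmem x).1 (Or.inl hx)
      · exact (hmem x).1 (Or.inr hx)
      · exact fun hvS => (hS hvS).elim (fun h => hLR h hv) (fun h => hMR h hv)
    · intro hv
      have hvu : v ∈ M ∪ L ∪ R := huniv ▸ Set.mem_univ v
      rcases hvu with h | hvR
      · rcases (hmem ⟨v, h.symm⟩).2 hv with h' | h'
        · exact Or.inl ⟨_, h', rfl⟩
        · exact Or.inr (Or.inl ⟨_, h', rfl⟩)
      · exact Or.inr (Or.inr hvR)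
  · rintro _ ⟨x, hx, rfl⟩ _ (⟨y, hy, rfl⟩ | hyR)
    · exact hadj x hx y hy
    · exact hLRadj _ (hAL x hx) _ hyR

/-- if `(M,L,R)` is a separation of `H` and `S ⊆ L ∪ M` is a vertex cut
of `H[L∪M]`, then `S` is a vertex cut of `H` or `S ∩ M` is a vertex cut of `H[M]`. -/
theorem stmt3 {V : Type*} [Fintype V] (H : SimpleGraph V) (M L R : Set V)
    (hsep : IsSeparation H M L R) (S : Set V) (hS : S ⊆ L ∪ M)
    (hcut : IsVertexCut (H.induce (L ∪ M)) (Subtype.val ⁻¹' S)) :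
    IsVertexCut H S ∨ IsVertexCut (H.induce M) (Subtype.val ⁻¹' (S ∩ M)) := by
  obtain ⟨A, B, hA, hB, hAB, hun, hadj⟩ := hcut
  by_cases hAM : ∀ x ∈ A, (x : V) ∉ M
  · exact Or.inl (isVertexCut_of_side_disjoint hsep hS hA hAB hun hadj hAM)
  by_cases hBM : ∀ x ∈ B, (x : V) ∉ M
  · exact Or.inl (isVertexCut_of_side_disjoint hsep hS hB hAB.symm (Set.union_comm A B ▸ hun)
      (fun x hx y hy h => hadj y hy x hx h.symm) hBM)
  push Not at hAM hBM
  obtain ⟨a, haA, haM⟩ := hAM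
  obtain ⟨b, hbB, hbM⟩ := hBM
  let ι : ↥M → ↥(L ∪ M) := fun x => ⟨x, Or.inr x.2⟩
  refine Or.inr ⟨ι ⁻¹' A, ι ⁻¹' B, ⟨⟨a, haM⟩, haA⟩, ⟨⟨b, hbM⟩, hbB⟩, hAB.preimage ι, ?_,
    fun x hx y hy => hadj (ι x) hx (ι y) hy⟩
  rw [← Set.preimage_union, hun]
  ext x
  simp [ι]
end

section
/- Let (M, L, R) be a separation of a finite simple graph H, let S_L ⊆ L ∪ M be a vertex cut of H[L∪M], and let S_R ⊆ R ∪ M be a vertex cut of H[R∪M]. If S_L ∩ M = S_R ∩ M and |M ∖ S_L| = 2, then S_L ∪ S_R is a vertex cut of H. -/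
/-!
Exactly two vertices `a`, `b` of `M` survive the deletion of `SL ∪ SR`. If one of the two cuts
leaves `a` and `b` on the same side, then its other side avoids `M`, hence lies entirely within
`L` or `R` and is already cut off from the rest of `H` (`cut_of_side_subset`). Otherwise both
cuts separate `a` from `b`; after exchanging the sides of one of them if necessary they split
`{a, b}` in the same way, and the unions of corresponding sides witness the cut of `H`
(`cut_of_sides_agree`).
-/

open SimpleGraph

/-- A vertex cut of `H[W]`, unpacked into sets of vertices of `H`. -/
theorem cut_induce_exists {V : Type*} {H : SimpleGraph V} {W S : Set V}
    (h : IsVertexCut (H.induce W) (Subtype.val ⁻¹' S)) :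
    ∃ A B : Set V, A.Nonempty ∧ B.Nonempty ∧ Disjoint A B ∧ A ∪ B = W \ S ∧
      ∀ x ∈ A, ∀ y ∈ B, ¬ H.Adj x y := by
  obtain ⟨A, B, hA, hB, hd, hu, hn⟩ := h
  refine ⟨Subtype.val '' A, Subtype.val '' B, hA.image _, hB.image _,
    (Set.disjoint_image_iff Subtype.val_injective).2 hd, ?_, ?_⟩
  · rw [← Set.image_union, hu, ← Set.preimage_compl, Subtype.image_preimage_coe,
      Set.sdiff_eq]
  · rintro _ ⟨x, hx, rfl⟩ _ ⟨y, hy, rfl⟩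
    exact hn x hx y hy

/-- If one side `B` of the cut of `H[P ∪ M]` lies inside `P`, then `B` has no neighbor in
the opposite part `Q` of the separation, so it is cut off from everything else in `H`. -/
theorem cut_of_side_subset {V : Type*} {H : SimpleGraph V} {M P Q SP SQ A B : Set V}
    (huniv : ∀ x, x ∈ M ∨ x ∈ P ∨ x ∈ Q) (hPQ : Disjoint P Q)
    (hnPQ : ∀ x ∈ P, ∀ y ∈ Q, ¬ H.Adj x y)
    (hSQ : SQ ⊆ Q ∪ M) (hagree : SP ∩ M = SQ ∩ M)
    (hA : A.Nonempty) (hB : B.Nonempty) (hd : Disjoint A B)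
    (hu : A ∪ B = (P ∪ M) \ SP) (hn : ∀ x ∈ A, ∀ y ∈ B, ¬ H.Adj x y) (hBP : B ⊆ P) :
    IsVertexCut H (SP ∪ SQ) := by
  simp only [Set.disjoint_left] at hPQ hd
  simp only [Set.ext_iff, Set.mem_union, Set.mem_inter_iff, Set.mem_sdiff] at hu hagree
  have hmem : ∀ x, (x ∈ A ∨ x ∈ B) → x ∉ SP ∪ SQ := by
    intro x hx h
    have := @hSQ x
    simp only [Set.mem_union] at this h
    grind
  refine ⟨(SP ∪ SQ)ᶜ \ B, B, ?_, hB, Set.disjoint_sdiff_left, ?_, ?_⟩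
  · obtain ⟨a, ha⟩ := hA
    exact ⟨a, hmem a (Or.inl ha), hd ha⟩
  · exact Set.sdiff_union_of_subset fun x hx => hmem x (Or.inr hx)
  · rintro x ⟨hx, hxB⟩ y hy hadj
    rcases huniv x with h | h | h
    · exact hn x (by have := hu x; simp only [Set.mem_compl_iff, Set.mem_union] at hx; grind) y hy hadj
    · exact hn x (by have := hu x; simp only [Set.mem_compl_iff, Set.mem_union] at hx; grind) y hy hadj
    · exact hnPQ y (hBP hy) x h hadj.symm

/-- If the two cuts split the surviving vertices of `M` in the same way, their sides can be
glued: every vertex of `A₁ ∪ A₂` in `M` lies in both `A₁` and `A₂`, and likewise for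
`B₁` and `B₂`. -/
theorem cut_of_sides_agree {V : Type*} {H : SimpleGraph V}
    {M L R SL SR A₁ B₁ A₂ B₂ : Set V}
    (huniv : ∀ x, x ∈ M ∨ x ∈ L ∨ x ∈ R)
    (hLR : Disjoint L R)
    (hnLR : ∀ x ∈ L, ∀ y ∈ R, ¬ H.Adj x y)
    (hSL : SL ⊆ L ∪ M) (hSR : SR ⊆ R ∪ M) (hagree : SL ∩ M = SR ∩ M)
    (hA₁ : A₁.Nonempty) (hB₁ : B₁.Nonempty) (hd₁ : Disjoint A₁ B₁)
    (hu₁ : A₁ ∪ B₁ = (L ∪ M) \ SL) (hn₁ : ∀ x ∈ A₁, ∀ y ∈ B₁, ¬ H.Adj x y)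
    (hd₂ : Disjoint A₂ B₂)
    (hu₂ : A₂ ∪ B₂ = (R ∪ M) \ SR) (hn₂ : ∀ x ∈ A₂, ∀ y ∈ B₂, ¬ H.Adj x y)
    (hsame : ∀ x ∈ M, x ∈ A₁ ↔ x ∈ A₂) :
    IsVertexCut H (SL ∪ SR) := by
  simp only [Set.disjoint_left] at hLR hd₁ hd₂
  simp only [Set.ext_iff, Set.mem_union, Set.mem_inter_iff, Set.mem_sdiff] at hu₁ hu₂ hagree
  simp only [Set.subset_def, Set.mem_union] at hSL hSR
  refine ⟨A₁ ∪ A₂, B₁ ∪ B₂, hA₁.inl, hB₁.inl, ?_, ?_, ?_⟩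
  · rw [Set.disjoint_left]
    intro x
    simp only [Set.mem_union]
    grind
  · ext x
    simp only [Set.mem_union, Set.mem_compl_iff]
    grind
  · intro x hx y hy hadj
    have hsymm := hadj.symm
    simp only [Set.mem_union] at hx hy
    grind

/-- gluing two cuts agreeing on `M` with `|M ∖ S_L| = 2` yields a cut of `H`. -/
theorem stmt4 {V : Type*} [Fintype V] (H : SimpleGraph V) (M L R : Set V)
    (hsep : IsSeparation H M L R) (SL SR : Set V)
    (hSL : SL ⊆ L ∪ M) (hSR : SR ⊆ R ∪ M)
    (hcutL : IsVertexCut (H.induce (L ∪ M)) (Subtype.val ⁻¹' SL))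
    (hcutR : IsVertexCut (H.induce (R ∪ M)) (Subtype.val ⁻¹' SR))
    (hagree : SL ∩ M = SR ∩ M) (hcard : (M \ SL).ncard = 2) :
    IsVertexCut H (SL ∪ SR) := by
  obtain ⟨-, -, hMLR, -, -, hLR, hnLR⟩ := hsep
  have huniv : ∀ x, x ∈ M ∨ x ∈ L ∨ x ∈ R := by
    intro x
    have : x ∈ M ∪ L ∪ R := hMLR ▸ Set.mem_univ x
    simpa [or_assoc] using this
  have huniv' : ∀ x, x ∈ M ∨ x ∈ R ∨ x ∈ L := fun x => (huniv x).imp_right Or.symm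
  have hnRL : ∀ x ∈ R, ∀ y ∈ L, ¬ H.Adj x y := fun x hx y hy h => hnLR y hy x hx h.symm
  obtain ⟨A₁, B₁, hA₁, hB₁, hd₁, hu₁, hn₁⟩ := cut_induce_exists hcutL
  obtain ⟨A₂, B₂, hA₂, hB₂, hd₂, hu₂, hn₂⟩ := cut_induce_exists hcutR
  have hn₁' : ∀ x ∈ B₁, ∀ y ∈ A₁, ¬ H.Adj x y := fun x hx y hy h => hn₁ y hy x hx h.symm
  have hn₂' : ∀ x ∈ B₂, ∀ y ∈ A₂, ¬ H.Adj x y := fun x hx y hy h => hn₂ y hy x hx h.symm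
  have hu₁' := (Set.union_comm B₁ A₁).trans hu₁
  have hu₂' := (Set.union_comm B₂ A₂).trans hu₂
  by_cases h1 : B₁ ⊆ L
  · exact cut_of_side_subset huniv hLR hnLR hSR hagree hA₁ hB₁ hd₁ hu₁ hn₁ h1
  by_cases h2 : A₁ ⊆ L
  · exact cut_of_side_subset huniv hLR hnLR hSR hagree hB₁ hA₁ hd₁.symm hu₁' hn₁' h2
  by_cases h3 : B₂ ⊆ R
  · rw [Set.union_comm]
    exact cut_of_side_subset huniv' hLR.symm hnRL hSL hagree.symm hA₂ hB₂ hd₂ hu₂ hn₂ h3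
  by_cases h4 : A₂ ⊆ R
  · rw [Set.union_comm]
    exact cut_of_side_subset huniv' hLR.symm hnRL hSL hagree.symm
      hB₂ hA₂ hd₂.symm hu₂' hn₂' h4
  -- All four sides now meet `M \ SL = {a, b}`, so both cuts separate `a` from `b`.
  obtain ⟨a, b, hab, hMab⟩ := Set.ncard_eq_two.1 hcard
  rw [Set.not_subset] at h1 h2 h3 h4
  obtain ⟨b₁, hb₁, hb₁L⟩ := h1
  obtain ⟨a₁, ha₁, ha₁L⟩ := h2
  obtain ⟨b₂, hb₂, hb₂R⟩ := h3
  obtain ⟨a₂, ha₂, ha₂R⟩ := h4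
  have hsame : (∀ x ∈ M, x ∈ A₁ ↔ x ∈ A₂) ∨ (∀ x ∈ M, x ∈ A₁ ↔ x ∈ B₂) := by
    have e₁ := Set.ext_iff.1 hu₁
    have e₂ := Set.ext_iff.1 hu₂
    have e₃ := Set.ext_iff.1 hMab
    have e₄ := Set.ext_iff.1 hagree
    have d₁ := Set.disjoint_left.1 hd₁
    have d₂ := Set.disjoint_left.1 hd₂
    simp only [Set.mem_union, Set.mem_inter_iff, Set.mem_sdiff, Set.mem_insert_iff,
      Set.mem_singleton_iff] at e₁ e₂ e₃ e₄
    have k₁ : a₁ = a ∨ a₁ = b := by grind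
    have k₂ : b₁ = a ∨ b₁ = b := by grind
    have k₃ : a₂ = a ∨ a₂ = b := by grind
    have k₄ : b₂ = a ∨ b₂ = b := by grind
    have n₁ : a₁ ≠ b₁ := by grind
    have n₂ : a₂ ≠ b₂ := by grind
    by_cases h : a₁ = a₂
    · have h' : b₁ = b₂ := by grind
      left
      intro x hx
      have : x ∈ A₁ ∨ x ∈ B₁ → x = a₁ ∨ x = b₁ := by grind
      have : x ∈ A₂ ∨ x ∈ B₂ → x = a₁ ∨ x = b₁ := by grind
      grind
    · have h' : a₁ = b₂ := by grind
      have h'' : b₁ = a₂ := by grind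
      right
      intro x hx
      have : x ∈ A₁ ∨ x ∈ B₁ → x = a₁ ∨ x = b₁ := by grind
      have : x ∈ A₂ ∨ x ∈ B₂ → x = a₁ ∨ x = b₁ := by grind
      grind
  rcases hsame with h | h
  · exact cut_of_sides_agree huniv hLR hnLR hSL hSR hagree
      hA₁ hB₁ hd₁ hu₁ hn₁ hd₂ hu₂ hn₂ h
  · exact cut_of_sides_agree huniv hLR hnLR hSL hSR hagree
      hA₁ hB₁ hd₁ hu₁ hn₁ hd₂.symm hu₂' hn₂' h
end

section
/- Let Ψ be either the class of all forests or the class of all bipartite graphs, let α, β be reals with 2 < α ≤ 3 and 4α − β = 6, and let G be a minimal counterexample for Ψ, α, β. If (M, L, R) is a separation of G with |M| ≥ 3 and q_{α,β}(G[M]) ≥ 0, then G[L∪M] or G[R∪M] has a Ψ-cut. -/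
/-!
The quality function is modular over a separation: since no edge joins `L` to `R`, the edge sets of
`G[L ∪ M]` and `G[R ∪ M]` cover `E(G)` and meet in `E(G[M])`, so inclusion-exclusion gives
`q(G[L ∪ M]) + q(G[R ∪ M]) = q(G) + q(G[M])` (`quality_add_of_isSeparation`). The right-hand side is
positive, hence one of the two sides has positive quality. As `|M| ≥ 3` and both `L` and `R` are
nonempty, that side has at least four and fewer than `|V(G)|` vertices, so the minimality of `G`
provides a `Ψ`-cut.
-/

open SimpleGraph

theorem card_edgeSet_induce {V : Type*} (G : SimpleGraph V) (S : Set V) :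
    Nat.card (G.induce S).edgeSet = {e ∈ G.edgeSet | ∀ v ∈ e, v ∈ S}.ncard := by
  have himg : Sym2.map Subtype.val '' (G.induce S).edgeSet =
      {e ∈ G.edgeSet | ∀ v ∈ e, v ∈ S} := by
    ext e
    induction e using Sym2.ind with
    | _ x y =>
      constructor
      · rintro ⟨f, hf, hfe⟩
        induction f using Sym2.ind with
        | _ a b =>
          rw [← hfe]
          simpa using hf
      · rintro ⟨hxy, hS⟩
        exact ⟨s(⟨x, hS x (by simp)⟩, ⟨y, hS y (by simp)⟩), by simpa using hxy, by simp⟩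
  rw [← himg, Set.ncard_image_of_injective _ (Sym2.map.injective Subtype.val_injective),
    Nat.card_coe_set_eq]

/-- The quality function is modular over a separation. -/
theorem quality_add_of_isSeparation {V : Type*} [Finite V] (α β : ℝ) (G : SimpleGraph V)
    {M L R : Set V} (hsep : IsSeparation G M L R) :
    quality α β (G.induce (L ∪ M)) + quality α β (G.induce (R ∪ M)) =
      quality α β G + quality α β (G.induce M) := by
  obtain ⟨-, -, hU, -, -, hLR, hno⟩ := hsep
  have hmem : ∀ x, x ∈ M ∨ x ∈ L ∨ x ∈ R := fun x => by
    have : x ∈ M ∪ L ∪ R := hU ▸ Set.mem_univ x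
    simpa [or_assoc] using this
  have hdis : ∀ x, x ∈ L → x ∉ R := fun x hL hR => Set.disjoint_left.mp hLR hL hR
  have hV : (L ∪ M).ncard + (R ∪ M).ncard = Nat.card V + M.ncard := by
    rw [← Set.ncard_union_add_ncard_inter, ← Set.ncard_univ]
    congr 2
    · ext x; have := hmem x; simp; tauto
    · ext x; have := hdis x; simp; tauto
  have hE : Nat.card (G.induce (L ∪ M)).edgeSet + Nat.card (G.induce (R ∪ M)).edgeSet =
      Nat.card G.edgeSet + Nat.card (G.induce M).edgeSet := by
    simp only [card_edgeSet_induce]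
    rw [← Set.ncard_union_add_ncard_inter, Nat.card_coe_set_eq]
    congr 2
    · ext e
      induction e using Sym2.ind with
      | _ x y =>
        have h1 := hmem x
        have h2 := hmem y
        have h3 := hno x
        have h4 := hno y
        have h5 := G.adj_comm x y
        simp
        grind
    · ext e
      induction e using Sym2.ind with
      | _ x y =>
        have h1 := hdis x
        have h2 := hdis y
        simp
        tauto
  simp only [quality, Nat.card_coe_set_eq] at hE ⊢
  have hV' : ((L ∪ M).ncard : ℝ) + (R ∪ M).ncard = Nat.card V + M.ncard := by exact_mod_cast hV
  have hE' := congrArg (Nat.cast : ℕ → ℝ) hE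
  push_cast at hE'
  linear_combination α * hV' - hE'

/-- A side `L ∪ M` of positive quality inherits a `Ψ`-cut from the minimality of `G`, because it has
at least `1 + 3` vertices and misses the nonempty set `R`. -/
theorem hasPsiCut_induce_side {Ψ : ∀ (W : Type), SimpleGraph W → Prop} {α β : ℝ}
    {V : Type} [Finite V] {G : SimpleGraph V} (hG : MinCounterexample Ψ α β G)
    {M L R : Set V} (hL : L.Nonempty) (hR : R.Nonempty) (hML : Disjoint M L) (hMR : Disjoint M R)
    (hLR : Disjoint L R) (hM : 3 ≤ M.ncard) (hq : 0 < quality α β (G.induce (L ∪ M))) :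
    HasPsiCut Ψ (G.induce (L ∪ M)) := by
  refine hG.2.2.2 _ _ ?_ ?_ hq
  · rw [Nat.card_coe_set_eq, Set.ncard_union_eq hML.symm]
    have := hL.ncard_pos
    omega
  · rw [Nat.card_coe_set_eq, ← Set.ncard_univ]
    obtain ⟨r, hr⟩ := hR
    refine Set.ncard_lt_ncard ((Set.ssubset_univ_iff).mpr fun h => ?_)
    have hr' : r ∈ L ∪ M := h ▸ Set.mem_univ r
    exact hr'.elim (fun h => Set.disjoint_left.mp hLR h hr) (fun h => Set.disjoint_left.mp hMR h hr)

/-- in a minimal counterexample, a separation with `|M| ≥ 3` and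
`q(G[M]) ≥ 0` forces a `Ψ`-cut in `G[L∪M]` or `G[R∪M]`. -/
theorem stmt5 (Ψ : ∀ (W : Type), SimpleGraph W → Prop)
    (hΨ : Ψ = ForestClass ∨ Ψ = BipartiteClass)
    (α β : ℝ) (hα1 : 2 < α) (hα2 : α ≤ 3) (hβ : 4 * α - β = 6)
    {V : Type} [Fintype V] (G : SimpleGraph V) (hG : MinCounterexample Ψ α β G)
    (M L R : Set V) (hsep : IsSeparation G M L R)
    (hM : 3 ≤ M.ncard) (hq : 0 ≤ quality α β (G.induce M)) :
    HasPsiCut Ψ (G.induce (L ∪ M)) ∨ HasPsiCut Ψ (G.induce (R ∪ M)) := by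
  have hsum := quality_add_of_isSeparation α β G hsep
  obtain ⟨hL, hR, -, hML, hMR, hLR, -⟩ := hsep
  have hpos := hG.2.1
  rcases lt_or_ge 0 (quality α β (G.induce (L ∪ M))) with h | h
  · exact .inl (hasPsiCut_induce_side hG hL hR hML hMR hLR hM h)
  · exact .inr (hasPsiCut_induce_side hG hR hL hMR hML hLR.symm hM (by linarith))
end

section
/- Let Ψ be either the class of all forests or the class of all bipartite graphs, let α, β be reals with 2 < α ≤ 3 and 4α − β = 6, and let G be a minimal counterexample for Ψ, α, β. Then |V(G)| ≥ 6. -/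
/-!
Since forests are bipartite, `G` has no forest cut. The hypothesis `4 * α - β = 6` turns positivity
of the quality into an edge bound.

* On four vertices, `G` has fewer than `6` edges, so some pair `u, v` is nonadjacent and the other
  two vertices form a forest cut.
* On five vertices, `G` has fewer than `6 + α ≤ 9` edges, so the complement has two distinct edges.
  If these share an endpoint `u`, being `uv` and `uw`, then the remaining two vertices separate `u`
  from `{v, w}`. If they are disjoint, being `uv` and `xy`, then the three vertices other than
  `u, v` include the nonadjacent pair `x, y`, hence induce a forest, and they separate `u` from `v`.

All the forests are instances of `isAcyclic_induce_of_subset_triple`.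
-/

open SimpleGraph

/-- Any edge inside `{a, b, c}` is `ac` or `bc`, too few for a cycle. The case `a = b` covers sets
of at most two vertices. -/
theorem isAcyclic_induce_of_subset_triple {V : Type*} (G : SimpleGraph V) {M : Set V} {a b c : V}
    (hM : ∀ x ∈ M, x = a ∨ x = b ∨ x = c) (hab : ¬ G.Adj a b) : (G.induce M).IsAcyclic := by
  classical
  intro v p hp
  let f : G.induce M ↪g G := SimpleGraph.Embedding.induce M
  have hq : (p.map f.toHom).IsCycle := hp.map f.injective
  have hsub : (p.map f.toHom).edges.toFinset ⊆ {s(a, c), s(b, c)} := by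
    intro e he
    rw [List.mem_toFinset, SimpleGraph.Walk.edges_map, List.mem_map] at he
    obtain ⟨e', he', rfl⟩ := he
    have hE := p.edges_subset_edgeSet he'
    induction e' using Sym2.ind with
    | _ x y =>
      have hxy : G.Adj x.1 y.1 := hE
      change s(x.1, y.1) ∈ _
      have hba : ¬ G.Adj b a := fun h => hab h.symm
      rcases hM x.1 x.2 with h1 | h1 | h1 <;> rcases hM y.1 y.2 with h2 | h2 | h2 <;>
        rw [h1, h2] at hxy ⊢ <;> simp_all [Sym2.eq_swap]
  have h3 := hq.three_le_length
  have hcard := Finset.card_le_card hsub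
  rw [List.toFinset_card_of_nodup hq.isTrail.edges_nodup, SimpleGraph.Walk.length_edges] at hcard
  have := Finset.card_le_two (a := s(a, c)) (b := s(b, c))
  omega

/-- Deleting everything outside `{u} ∪ R` separates `u` from `R` when `u` has no neighbour in `R`;
the cut is a forest when it lies in a triple containing a nonadjacent pair. -/
theorem hasForestCut_of_nonadj {V : Type*} (G : SimpleGraph V) {u : V} {R : Set V}
    (hR : R.Nonempty) (huR : u ∉ R) (hadj : ∀ y ∈ R, ¬ G.Adj u y) {a b c : V}
    (hM : ∀ x, x ≠ u → x ∉ R → x = a ∨ x = b ∨ x = c) (hab : ¬ G.Adj a b) :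
    HasForestCut G := by
  refine ⟨({u} ∪ R)ᶜ, ⟨{u}, R, Set.singleton_nonempty u, hR, by simpa using huR, by simp, ?_⟩,
    isAcyclic_induce_of_subset_triple G (c := c) (fun x hx => ?_) hab⟩
  · rintro x rfl y hy
    exact hadj y hy
  · simp only [Set.mem_compl_iff, Set.mem_union, Set.mem_singleton_iff, not_or] at hx
    exact hM x hx.1 hx.2

theorem card_edgeSet_add_compl {V : Type*} [Fintype V] (G : SimpleGraph V) :
    Nat.card G.edgeSet + Nat.card Gᶜ.edgeSet = (Nat.card V).choose 2 := by
  classical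
  rw [Nat.card_eq_fintype_card, Nat.card_eq_fintype_card, Nat.card_eq_fintype_card,
    ← SimpleGraph.card_edgeFinset_top_eq_card_choose_two, ← SimpleGraph.edgeFinset_card,
    ← SimpleGraph.edgeFinset_card, ← Finset.card_union_of_disjoint]
  · rw [← SimpleGraph.edgeFinset_sup]
    congr 1
    ext e
    induction e using Sym2.ind with
    | _ x y =>
      simp only [SimpleGraph.edgeFinset_sup, Finset.mem_union, SimpleGraph.mem_edgeFinset,
        SimpleGraph.mem_edgeSet, SimpleGraph.compl_adj, SimpleGraph.top_adj]
      exact ⟨fun h => h.elim (fun h => h.ne) (fun h => h.1), fun h => by tauto⟩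
  · rw [SimpleGraph.disjoint_edgeFinset]
    exact disjoint_compl_right

theorem hasForestCut_of_card_four {V : Type*} [Fintype V] (G : SimpleGraph V)
    (hV : Nat.card V = 4) (hE : Nat.card G.edgeSet < 6) : HasForestCut G := by
  classical
  have hc := card_edgeSet_add_compl G
  rw [hV, show Nat.choose 4 2 = 6 from rfl] at hc
  obtain ⟨⟨e, he⟩⟩ : Nonempty Gᶜ.edgeSet := (Nat.card_pos_iff.mp (by omega)).1
  induction e using Sym2.ind with
  | _ u v =>
    obtain ⟨hne, huv⟩ : u ≠ v ∧ ¬ G.Adj u v := he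
    have h2 : (({u, v} : Finset V)ᶜ).card = 2 := by
      rw [Finset.card_compl, Finset.card_pair hne, ← Nat.card_eq_fintype_card, hV]
    obtain ⟨x, y, -, hxy⟩ := Finset.card_eq_two.mp h2
    refine hasForestCut_of_nonadj G (u := u) (R := {v}) (Set.singleton_nonempty v) (by simpa)
      (by simpa) (a := x) (b := x) (c := y) (fun z hu hv => ?_) (G.irrefl)
    have hz : z ∈ ({u, v} : Finset V)ᶜ := by simpa using ⟨hu, hv⟩
    rw [hxy, Finset.mem_insert, Finset.mem_singleton] at hz
    exact Or.inr hz

/-- A pair of nonedges with a common endpoint `u` yields a forest cut of a graph on five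
vertices. -/
theorem hasForestCut_of_cherry {V : Type*} [Fintype V] (G : SimpleGraph V)
    (hV : Nat.card V = 5) {u v w : V} (huv : u ≠ v) (huw : u ≠ w) (hvw : v ≠ w)
    (h1 : ¬ G.Adj u v) (h2 : ¬ G.Adj u w) : HasForestCut G := by
  classical
  have hc : (({u, v, w} : Finset V)ᶜ).card = 2 := by
    rw [Finset.card_compl, Finset.card_eq_three.mpr ⟨u, v, w, huv, huw, hvw, rfl⟩,
      ← Nat.card_eq_fintype_card, hV]
  obtain ⟨x, y, -, hxy⟩ := Finset.card_eq_two.mp hc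
  refine hasForestCut_of_nonadj G (u := u) (R := {v, w}) ⟨v, by simp⟩ (by simp [huv, huw])
    (by simp [h1, h2]) (a := x) (b := x) (c := y) (fun z hu hv => ?_) (G.irrefl)
  have hz : z ∈ ({u, v, w} : Finset V)ᶜ := by
    simpa using And.intro hu (by simpa using hv)
  rw [hxy, Finset.mem_insert, Finset.mem_singleton] at hz
  exact Or.inr hz

theorem hasForestCut_of_card_five {V : Type*} [Fintype V] (G : SimpleGraph V)
    (hV : Nat.card V = 5) (hE : Nat.card G.edgeSet < 9) : HasForestCut G := by
  classical
  have hc := card_edgeSet_add_compl G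
  rw [hV, show Nat.choose 5 2 = 10 from rfl] at hc
  obtain ⟨⟨e, he⟩, ⟨f, hf⟩, hef⟩ : ∃ e f : Gᶜ.edgeSet, e ≠ f := by
    have : Nontrivial Gᶜ.edgeSet := Finite.one_lt_card_iff_nontrivial.mp (by omega)
    exact exists_pair_ne _
  replace hef : e ≠ f := fun h => hef (Subtype.ext h)
  induction e using Sym2.ind with
  | _ u v =>
  induction f using Sym2.ind with
  | _ x y =>
    obtain ⟨huv, h1⟩ : u ≠ v ∧ ¬ G.Adj u v := he
    obtain ⟨hxy, h2⟩ : x ≠ y ∧ ¬ G.Adj x y := hf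
    have h1' : ¬ G.Adj v u := fun h => h1 h.symm
    have h2' : ¬ G.Adj y x := fun h => h2 h.symm
    by_cases hux : u = x
    · subst hux
      exact hasForestCut_of_cherry G hV huv hxy (fun h => hef (by rw [h])) h1 h2
    by_cases huy : u = y
    · subst huy
      exact hasForestCut_of_cherry G hV huv hux (fun h => hef (by rw [h, Sym2.eq_swap])) h1 h2'
    by_cases hvx : v = x
    · subst hvx
      exact hasForestCut_of_cherry G hV huv.symm hxy huy h1' h2
    by_cases hvy : v = y
    · subst hvy
      exact hasForestCut_of_cherry G hV huv.symm hxy.symm hux h1' h2'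
    have h4 : ({u, v, x, y} : Finset V).card = 4 := by
      rw [Finset.card_insert_of_notMem (by simp [huv, hux, huy]),
        Finset.card_eq_three.mpr ⟨v, x, y, hvx, hvy, hxy, rfl⟩]
    have hcard : (({u, v, x, y} : Finset V)ᶜ).card = 1 := by
      rw [Finset.card_compl, h4, ← Nat.card_eq_fintype_card, hV]
    obtain ⟨z, hz⟩ := Finset.card_eq_one.mp hcard
    refine hasForestCut_of_nonadj G (u := u) (R := {v}) (Set.singleton_nonempty v) (by simpa)
      (by simpa) (a := x) (b := y) (c := z) (fun t hu hv => ?_) h2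
    by_contra! ht
    have htm : t ∈ ({u, v, x, y} : Finset V)ᶜ := by
      simpa using And.intro hu (And.intro hv (And.intro ht.1 ht.2.1))
    rw [hz, Finset.mem_singleton] at htm
    exact ht.2.2 htm

/-- a minimal counterexample has at least 6 vertices. -/
theorem stmt6 (Ψ : ∀ (W : Type), SimpleGraph W → Prop)
    (hΨ : Ψ = ForestClass ∨ Ψ = BipartiteClass)
    (α β : ℝ) (hα1 : 2 < α) (hα2 : α ≤ 3) (hβ : 4 * α - β = 6)
    {V : Type} [Fintype V] (G : SimpleGraph V) (hG : MinCounterexample Ψ α β G) :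
    6 ≤ Nat.card V := by
  obtain ⟨h4, hq, hcut, -⟩ := hG
  have hno : ¬ HasForestCut G := by
    rintro ⟨M, hM, hac⟩
    refine hcut ⟨M, hM, ?_⟩
    rcases hΨ with rfl | rfl
    · exact hac
    · exact hac.isBipartite
  by_contra hlt
  unfold quality at hq
  obtain h | h : Nat.card V = 4 ∨ Nat.card V = 5 := by omega
  · refine hno (hasForestCut_of_card_four G h ?_)
    rw [h] at hq
    push_cast at hq
    have : (Nat.card G.edgeSet : ℝ) < 6 := by linarith
    exact_mod_cast this
  · refine hno (hasForestCut_of_card_five G h ?_)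
    rw [h] at hq
    push_cast at hq
    have : (Nat.card G.edgeSet : ℝ) < 9 := by linarith
    exact_mod_cast this
end
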